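/- arXiv:1903.09357 — 4 statements merged into one kernel-verified Lean document; each statement's English description precedes it below -/
import Mathlib

section
/- Assume the faithfulness condition (F). Let (u,v) ∈ N_A be a point of the complex shell such that either u_i ≠ 0 for all i = 1,…,ℓ, or v_i ≠ 0 for all i = 1,…,ℓ. Then there exist t ∈ (ℂ^×)^ℓ and (z,w) ∈ N_B such that t·(u,v) = φ_ℂ(z,w). In other words, every point of N_A all of whose first ℓ u-coordinates (or all of whose first ℓ v-coordinates) are nonzero lies in the (ℂ^×)^ℓ-orbit of the section S = φ_ℂ(N_B). -/
open Complex

/-- Points of `ℂ^{ℓ+k}`, split as the first `ℓ` and the last `k` coordinates. -/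
abbrev PtA (ℓ k : ℕ) := (Fin ℓ → ℂ) × (Fin k → ℂ)

/-- Points of `ℂ^{k+1}`, split as the first coordinate and the last `k` coordinates. -/
abbrev PtB (k : ℕ) := ℂ × (Fin k → ℂ)

/-- The action of `(ℂ^×)^ℓ` on `ℂ^{ℓ+k} × ℂ^{ℓ+k}` (pairs `(u,v)`):
`u_i ↦ t_i^{-a_i} u_i`, `v_i ↦ t_i^{a_i} v_i` for `i ≤ ℓ`,
`u_{ℓ+r} ↦ (∏_i t_i^{c_r n_i}) u_{ℓ+r}`, `v_{ℓ+r} ↦ (∏_i t_i^{c_r n_i})⁻¹ v_{ℓ+r}`. -/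
noncomputable def actC (ℓ k : ℕ) (a n : Fin ℓ → ℕ) (c : Fin k → ℕ)
    (t : Fin ℓ → ℂ) (p : PtA ℓ k × PtA ℓ k) : PtA ℓ k × PtA ℓ k :=
  ((fun i => t i ^ (-(a i : ℤ)) * p.1.1 i,
      fun r => (∏ i, t i ^ (c r * n i)) * p.1.2 r),
   (fun i => t i ^ (a i : ℤ) * p.2.1 i,
      fun r => (∏ i, t i ^ (c r * n i))⁻¹ * p.2.2 r))

/-- The complex shell `N_A`. -/
def memNA (ℓ k : ℕ) (a n : Fin ℓ → ℕ) (c : Fin k → ℕ)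
    (p : PtA ℓ k × PtA ℓ k) : Prop :=
  ∀ i, -(a i : ℂ) * p.1.1 i * p.2.1 i
      + (n i : ℂ) * ∑ r, (c r : ℂ) * p.1.2 r * p.2.2 r = 0

/-- The complex shell `N_B`. -/
def memNB (k : ℕ) (α β : ℕ) (c : Fin k → ℕ) (p : PtB k × PtB k) : Prop :=
  -(α : ℂ) * p.1.1 * p.2.1 + (β : ℂ) * ∑ r, (c r : ℂ) * p.1.2 r * p.2.2 r = 0

/-- The embedding `φ : ℂ^{k+1} → ℂ^{ℓ+k}`. -/
noncomputable def phiMap (ℓ k : ℕ) (m : Fin ℓ → ℕ) (β : ℕ)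
    (z : PtB k) : PtA ℓ k :=
  (fun i => (Real.sqrt ((m i : ℝ) / (β : ℝ)) : ℂ) * z.1, z.2)

/-- The complexified embedding `φ_ℂ(z,w) = (φz, φw)`. -/
noncomputable def phiC (ℓ k : ℕ) (m : Fin ℓ → ℕ) (β : ℕ)
    (p : PtB k × PtB k) : PtA ℓ k × PtA ℓ k :=
  (phiMap ℓ k m β p.1, phiMap ℓ k m β p.2)

/-! On `N_A` the product `u_i v_i` equals `(m_i / β) · (β / α) ∑ c_r u_{ℓ+r} v_{ℓ+r}`, so it is
proportional to `m_i` with a constant independent of `i`. If no `u_i` vanishes, extracting `a_i`-th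
roots gives `t` that moves every `u_i` to `√(m_i / β)`; as the action preserves the products
`u_j v_j`, hence `N_A`, the new `v_i` are forced to be proportional to `√(m_i / β)` as well, and the
point lies on `S`. The case of the `v_i` follows from the symmetry `(u, v) ↦ (v, u)`, which replaces
`t` by `t⁻¹`. -/

theorem exists_ne_zero_forall_pow_eq {ι K : Type*} [Field K] [IsAlgClosed K] {a : ι → ℕ}
    (ha : ∀ i, 0 < a i) {x : ι → K} (hx : ∀ i, x i ≠ 0) :
    ∃ t : ι → K, (∀ i, t i ≠ 0) ∧ ∀ i, t i ^ a i = x i := by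
  choose t ht using fun i => IsAlgClosed.exists_pow_nat_eq (x i) (ha i)
  exact ⟨t, fun i => ne_zero_pow (ha i).ne' (ht i ▸ hx i), ht⟩

theorem sqrt_natCast_div_ne_zero {m β : ℕ} (hm : 0 < m) (hβ : 0 < β) :
    (√((m : ℝ) / β) : ℂ) ≠ 0 :=
  ofReal_ne_zero.mpr (by positivity)

section Weights

theorem pos_of_mul_eq_mul {m a n α : ℕ} (hn : 0 < n) (hα : 0 < α) (h : m * a = n * α) : 0 < m :=
  Nat.pos_of_mul_pos_right (h ▸ Nat.mul_pos hn hα)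

variable {ι : Type*} [Fintype ι] {a : ι → ℕ} (n : ι → ℕ)

theorem mul_lcm_div_mul_cancel (i : ι) :
    n i * Finset.univ.lcm a / a i * a i = n i * Finset.univ.lcm a :=
  Nat.div_mul_cancel ((Finset.dvd_lcm (Finset.mem_univ i)).mul_left _)

theorem lcm_univ_pos (ha : ∀ i, 0 < a i) : 0 < Finset.univ.lcm a :=
  Nat.pos_of_ne_zero (Finset.lcm_ne_zero_iff.mpr fun i _ => (ha i).ne')

variable {n}

theorem sum_mul_lcm_div_pos [Nonempty ι] (ha : ∀ i, 0 < a i) (hn : ∀ i, 0 < n i) :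
    0 < ∑ i, n i * Finset.univ.lcm a / a i :=
  Finset.sum_pos
    (fun i _ => pos_of_mul_eq_mul (hn i) (lcm_univ_pos ha) (mul_lcm_div_mul_cancel n i))
    Finset.univ_nonempty

end Weights

section Shell

variable {ℓ k : ℕ} {a n : Fin ℓ → ℕ} {c : Fin k → ℕ} {t : Fin ℓ → ℂ} {p : PtA ℓ k × PtA ℓ k}

theorem actC_head_mul_head {i : Fin ℓ} (ht : t i ≠ 0) :
    (actC ℓ k a n c t p).1.1 i * (actC ℓ k a n c t p).2.1 i = p.1.1 i * p.2.1 i := by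
  simp only [actC, zpow_neg]
  field_simp

theorem actC_tail_mul_tail (ht : ∀ i, t i ≠ 0) (r : Fin k) :
    (actC ℓ k a n c t p).1.2 r * (actC ℓ k a n c t p).2.2 r = p.1.2 r * p.2.2 r := by
  have hprod : ∏ i, t i ^ (c r * n i) ≠ 0 :=
    Finset.prod_ne_zero_iff.mpr fun i _ => pow_ne_zero _ (ht i)
  simp only [actC]
  field_simp

theorem memNA_actC (ht : ∀ i, t i ≠ 0) :
    memNA ℓ k a n c (actC ℓ k a n c t p) ↔ memNA ℓ k a n c p := by
  simp only [memNA, mul_assoc, actC_head_mul_head (ht _), actC_tail_mul_tail ht]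

theorem memNA_swap : memNA ℓ k a n c p.swap ↔ memNA ℓ k a n c p := by
  simp only [memNA, Prod.fst_swap, Prod.snd_swap, mul_right_comm]

theorem memNB_swap {α β : ℕ} {q : PtB k × PtB k} :
    memNB k α β c q.swap ↔ memNB k α β c q := by
  simp only [memNB, Prod.fst_swap, Prod.snd_swap, mul_right_comm]

theorem actC_inv : actC ℓ k a n c t⁻¹ p = (actC ℓ k a n c t p.swap).swap := by
  simp [actC]

theorem exists_actC_head_eq (ha : ∀ i, 0 < a i) {s : Fin ℓ → ℂ} (hs : ∀ i, s i ≠ 0)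
    (hu : ∀ i, p.1.1 i ≠ 0) :
    ∃ t : Fin ℓ → ℂ, (∀ i, t i ≠ 0) ∧ (actC ℓ k a n c t p).1.1 = s := by
  obtain ⟨t, ht, hta⟩ := exists_ne_zero_forall_pow_eq ha fun i => div_ne_zero (hu i) (hs i)
  refine ⟨t, ht, funext fun i => ?_⟩
  simp only [actC]
  rw [zpow_neg, zpow_natCast, hta, inv_div, div_mul_cancel₀ _ (hu i)]

variable {m : Fin ℓ → ℕ} {α β : ℕ}

theorem memNA.head_mul_head (hp : memNA ℓ k a n c p) (ha : ∀ i, 0 < a i) (hα : 0 < α)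
    (hm : ∀ i, m i * a i = n i * α) (i : Fin ℓ) :
    p.1.1 i * p.2.1 i = m i * ((∑ r, (c r : ℂ) * p.1.2 r * p.2.2 r) / α) := by
  have haC : (a i : ℂ) ≠ 0 := mod_cast (ha i).ne'
  have hαC : (α : ℂ) ≠ 0 := mod_cast hα.ne'
  have hmC : (m i : ℂ) * a i = n i * α := mod_cast hm i
  rw [← mul_div_assoc, eq_div_iff hαC]
  refine mul_left_cancel₀ haC ?_
  linear_combination -(α : ℂ) * hp i - (∑ r, (c r : ℂ) * p.1.2 r * p.2.2 r) * hmC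

theorem memNA.exists_eq_phiC (hp : memNA ℓ k a n c p) (ha : ∀ i, 0 < a i)
    (hm₀ : ∀ i, 0 < m i) (hα : 0 < α) (hβ : 0 < β) (hm : ∀ i, m i * a i = n i * α)
    (hu : p.1.1 = fun i => (√((m i : ℝ) / β) : ℂ)) :
    ∃ q, memNB k α β c q ∧ p = phiC ℓ k m β q := by
  have hαC : (α : ℂ) ≠ 0 := mod_cast hα.ne'
  have hβC : (β : ℂ) ≠ 0 := mod_cast hβ.ne'
  set S : ℂ := ∑ r, (c r : ℂ) * p.1.2 r * p.2.2 r with hS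
  have hv (i) : p.2.1 i = √((m i : ℝ) / β) * (β * (S / α)) := by
    have hsq : (√((m i : ℝ) / β) : ℂ) * √((m i : ℝ) / β) = m i / β := by
      rw [← ofReal_mul, Real.mul_self_sqrt (by positivity)]
      push_cast
      rfl
    refine mul_left_cancel₀ (sqrt_natCast_div_ne_zero (hm₀ i) hβ) ?_
    calc (√((m i : ℝ) / β) : ℂ) * p.2.1 i
        = m i * (S / α) := by rw [hS, ← hp.head_mul_head ha hα hm, hu]
      _ = m i / β * (β * (S / α)) := by field_simp
      _ = √((m i : ℝ) / β) * (√((m i : ℝ) / β) * (β * (S / α))) := by rw [← hsq, mul_assoc]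
  refine ⟨((1, p.1.2), (β * (S / α), p.2.2)), ?_, ?_⟩
  · simp only [memNB, ← hS]
    field_simp
    ring
  · ext i
    · simp [phiC, phiMap, hu]
    · rfl
    · exact hv i
    · rfl

theorem memNA.exists_actC_eq_phiC (hp : memNA ℓ k a n c p) (ha : ∀ i, 0 < a i)
    (hm₀ : ∀ i, 0 < m i) (hα : 0 < α) (hβ : 0 < β) (hm : ∀ i, m i * a i = n i * α)
    (hu : ∀ i, p.1.1 i ≠ 0) :
    ∃ t : Fin ℓ → ℂ, (∀ i, t i ≠ 0) ∧
      ∃ q, memNB k α β c q ∧ actC ℓ k a n c t p = phiC ℓ k m β q := by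
  obtain ⟨t, ht, hhead⟩ :=
    exists_actC_head_eq ha (fun i => sqrt_natCast_div_ne_zero (hm₀ i) hβ) hu
  exact ⟨t, ht, ((memNA_actC ht).mpr hp).exists_eq_phiC ha hm₀ hα hβ hm hhead⟩

end Shell

theorem stmt3_general {ℓ k : ℕ} {a n m : Fin ℓ → ℕ} {c : Fin k → ℕ} {α β : ℕ}
    (ha : ∀ i, 0 < a i) (hn : ∀ i, 0 < n i) (hα : 0 < α) (hβ : 0 < β)
    (hm : ∀ i, m i * a i = n i * α) {p : PtA ℓ k × PtA ℓ k} (hp : memNA ℓ k a n c p)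
    (huv : (∀ i, p.1.1 i ≠ 0) ∨ (∀ i, p.2.1 i ≠ 0)) :
    ∃ t : Fin ℓ → ℂ, (∀ i, t i ≠ 0) ∧
      ∃ q : PtB k × PtB k, memNB k α β c q ∧ actC ℓ k a n c t p = phiC ℓ k m β q := by
  have hm₀ (i) : 0 < m i := pos_of_mul_eq_mul (hn i) hα (hm i)
  rcases huv with hu | hv
  · exact hp.exists_actC_eq_phiC ha hm₀ hα hβ hm hu
  · obtain ⟨t, ht, q, hq, htq⟩ := (memNA_swap.mpr hp).exists_actC_eq_phiC ha hm₀ hα hβ hm hv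
    exact ⟨t⁻¹, fun i => inv_ne_zero (ht i), q.swap, memNB_swap.mpr hq,
      actC_inv.trans (congrArg Prod.swap htq)⟩

/-- every point of `N_A` whose first `ℓ` `u`-coordinates (or first `ℓ`
`v`-coordinates) are all nonzero lies in the `(ℂ^×)^ℓ`-orbit of `S = φ_ℂ(N_B)`. -/
theorem stmt3 (ℓ k : ℕ) (hℓ : 1 ≤ ℓ) (hk : 1 ≤ k)
    (a n : Fin ℓ → ℕ) (c : Fin k → ℕ)
    (ha : ∀ i, 0 < a i) (hn : ∀ i, 0 < n i) (hc : ∀ r, 0 < c r)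
    (hF1 : ∀ i j, i ≠ j → Nat.gcd (a i) (a j) = 1)
    (hF2 : ∀ i, ∃ r, Nat.gcd (a i) (c r * n i) = 1) :
    let α : ℕ := Finset.univ.lcm a
    let m : Fin ℓ → ℕ := fun i => n i * α / a i
    let β : ℕ := ∑ i, m i
    ∀ p : PtA ℓ k × PtA ℓ k, memNA ℓ k a n c p →
      ((∀ i, p.1.1 i ≠ 0) ∨ (∀ i, p.2.1 i ≠ 0)) →
      ∃ t : Fin ℓ → ℂ, (∀ i, t i ≠ 0) ∧
        ∃ q : PtB k × PtB k, memNB k α β c q ∧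
          actC ℓ k a n c t p = phiC ℓ k m β q := by
  have : Nonempty (Fin ℓ) := ⟨⟨0, hℓ⟩⟩
  exact fun _ => stmt3_general ha hn (lcm_univ_pos ha) (sum_mul_lcm_div_pos ha hn)
    (mul_lcm_div_mul_cancel n)
end

section
/- Assume the faithfulness condition (F). Let (z,w) ∈ N_B and t ∈ (ℂ^×)^ℓ be such that t·φ_ℂ(z,w) ∈ S = φ_ℂ(N_B). Then there exists s ∈ ℂ^× such that t·φ_ℂ(z,w) = (s^{α/a_1}, s^{α/a_2}, …, s^{α/a_ℓ})·φ_ℂ(z,w). (This is the Seshadri-section property: the intersection of any (ℂ^×)^ℓ-orbit with S is an orbit of the one-parameter subgroup {(s^{α/a_1},…,s^{α/a_ℓ}) : s ∈ ℂ^×}.) -/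
open Complex

/-!
Write `P i = ∏ j ≠ i, a j`, which is `α / a i` for pairwise coprime weights `a`. If `φ_ℂ(z,w)` has a
nonzero first coordinate `z₁` or `w₁`, comparing the first `ℓ` coordinates of `t · φ_ℂ(z,w)` with
those of a point of the image of `φ_ℂ` shows that `t i ^ a i` does not depend on `i`. The numbers
`P i` have no common factor; choosing integers `μ i` with `∑ μ i * P i = 1`, the element
`s = ∏ i, t i ^ μ i` satisfies `s ^ P i = t i`, because `t j ^ P i = t i ^ P j`. If `z₁ = w₁ = 0`,
only the character `∏ i, t i ^ n i` matters, and it takes the value `s ^ β` on the one-parameter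
subgroup, so any `β`-th root of it will do.
-/

theorem prod_zpow_eq_zpow_sum {ι G : Type*} [CommGroup G] (S : Finset ι) (f : ι → ℤ) (g : G) :
    ∏ i ∈ S, g ^ f i = g ^ ∑ i ∈ S, f i :=
  (Finset.sum_smul (f := f) (s := S) (x := Additive.ofMul g)).symm

section CoprimeExponents

variable {ι : Type*} [Fintype ι] [DecidableEq ι]

theorem pow_prod_compl_singleton_comm {M : Type*} [Monoid M] {a : ι → ℕ} {t : ι → M}
    (h : ∀ i j, t i ^ a i = t j ^ a j) (i j : ι) :
    t j ^ ∏ x ∈ {i}ᶜ, a x = t i ^ ∏ x ∈ {j}ᶜ, a x := by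
  obtain rfl | hij := eq_or_ne i j
  · rfl
  have hj : j ∈ ({i}ᶜ : Finset ι) := by simpa using hij.symm
  have hi : i ∈ ({j}ᶜ : Finset ι) := by simpa using hij
  have herase : ({i}ᶜ : Finset ι).erase j = ({j}ᶜ : Finset ι).erase i := by
    ext x
    simp [and_comm]
  rw [← Finset.mul_prod_erase _ _ hj, ← Finset.mul_prod_erase _ _ hi, herase, pow_mul, pow_mul,
    h j i]

theorem exists_forall_pow_prod_compl_singleton_eq {G : Type*} [CommGroup G] {a : ι → ℕ}
    (ha : Pairwise (Function.onFun Nat.Coprime a)) {t : ι → G}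
    (h : ∀ i j, t i ^ a i = t j ^ a j) :
    ∃ s : G, ∀ i, s ^ ∏ j ∈ {i}ᶜ, a j = t i := by
  cases isEmpty_or_nonempty ι
  · exact ⟨1, isEmptyElim⟩
  obtain ⟨μ, hμ⟩ : ∃ μ : ι → ℤ, ∑ i, μ i * ∏ j ∈ {i}ᶜ, (a j : ℤ) = 1 :=
    exists_sum_eq_one_iff_pairwise_coprime'.mpr fun _ _ hij => (ha hij).isCoprime
  refine ⟨∏ j, t j ^ μ j, fun i => ?_⟩
  calc (∏ j, t j ^ μ j) ^ ∏ x ∈ {i}ᶜ, a x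
      = ∏ j, (t j ^ ∏ x ∈ {i}ᶜ, a x) ^ μ j := by
        rw [← Finset.prod_pow]
        exact Finset.prod_congr rfl fun j _ => by
          rw [← zpow_natCast, zpow_comm, zpow_natCast]
    _ = ∏ j, t i ^ (μ j * ∏ x ∈ {j}ᶜ, (a x : ℤ)) :=
        Finset.prod_congr rfl fun j _ => by
          rw [pow_prod_compl_singleton_comm h, mul_comm, zpow_mul, ← Nat.cast_prod, zpow_natCast]
    _ = t i := by rw [prod_zpow_eq_zpow_sum, hμ, zpow_one]

theorem univ_lcm_div_eq_prod_compl_singleton {a : ι → ℕ}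
    (ha : Pairwise (Function.onFun Nat.Coprime a)) {i : ι} (hi : 0 < a i) :
    Finset.univ.lcm a / a i = ∏ j ∈ {i}ᶜ, a j := by
  rw [Finset.lcm_eq_prod (ha.set_pairwise _), Fintype.prod_eq_mul_prod_compl i,
    Nat.mul_div_cancel_left _ hi]

end CoprimeExponents

theorem exists_forall_pow_univ_lcm_div_eq {ι G : Type*} [Fintype ι] [CommGroup G]
    {a : ι → ℕ} (ha : ∀ i, 0 < a i) (hcop : Pairwise (Function.onFun Nat.Coprime a))
    {t : ι → G} (h : ∀ i j, t i ^ a i = t j ^ a j) :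
    ∃ s : G, ∀ i, s ^ (Finset.univ.lcm a / a i) = t i := by
  classical
  obtain ⟨s, hs⟩ := exists_forall_pow_prod_compl_singleton_eq hcop h
  exact ⟨s, fun i => by rw [univ_lcm_div_eq_prod_compl_singleton hcop (ha i), hs i]⟩

theorem prod_pow_div_pow_eq_pow_sum {ι M : Type*} [Fintype ι] [CommMonoid M] {a : ι → ℕ} {N : ℕ}
    (h : ∀ i, a i ∣ N) (n : ι → ℕ) (s : M) :
    ∏ i, (s ^ (N / a i)) ^ n i = s ^ ∑ i, n i * N / a i := by
  rw [← Finset.prod_pow_eq_pow_sum]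
  refine Finset.prod_congr rfl fun i _ => ?_
  rw [← pow_mul, Nat.mul_div_assoc _ (h i), mul_comm]

section Action

variable {ℓ k : ℕ} {a n m : Fin ℓ → ℕ} {c : Fin k → ℕ} {β : ℕ} {p q : PtB k × PtB k}
  {t t' : Fin ℓ → ℂ}

theorem pow_eq_pow_of_actC_phiC_eq (hm : ∀ i, 0 < m i) (hβ : 0 < β)
    (hp : ¬(p.1.1 = 0 ∧ p.2.1 = 0))
    (h : actC ℓ k a n c t (phiC ℓ k m β p) = phiC ℓ k m β q) (i j : Fin ℓ) :
    t i ^ a i = t j ^ a j := by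
  simp only [actC, phiC, phiMap, Prod.mk.injEq, funext_iff, zpow_neg, zpow_natCast,
    mul_left_comm _ (Complex.ofReal _)] at h
  have hsqrt (i : Fin ℓ) : (√((m i : ℝ) / β) : ℂ) ≠ 0 := by
    have := hm i
    exact_mod_cast (by positivity : √((m i : ℝ) / β) ≠ 0)
  have hz (i : Fin ℓ) : (t i ^ a i)⁻¹ * p.1.1 = q.1.1 := mul_left_cancel₀ (hsqrt i) (h.1.1 i)
  have hw (i : Fin ℓ) : t i ^ a i * p.2.1 = q.2.1 := mul_left_cancel₀ (hsqrt i) (h.2.1 i)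
  obtain hp | hp := not_and_or.mp hp
  · exact inv_injective (mul_right_cancel₀ hp ((hz i).trans (hz j).symm))
  · exact mul_right_cancel₀ hp ((hw i).trans (hw j).symm)

theorem actC_phiC_congr_of_prod_pow_eq (hz : p.1.1 = 0) (hw : p.2.1 = 0)
    (h : ∏ i, t i ^ n i = ∏ i, t' i ^ n i) :
    actC ℓ k a n c t (phiC ℓ k m β p) = actC ℓ k a n c t' (phiC ℓ k m β p) := by
  have hprod (r : Fin k) : ∏ i, t i ^ (c r * n i) = ∏ i, t' i ^ (c r * n i) := by
    simp only [mul_comm (c r), pow_mul, Finset.prod_pow, h]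
  simp only [actC, phiC, phiMap, hz, hw, mul_zero, hprod]

end Action

theorem stmt4_general {ℓ k : ℕ} (hℓ : 1 ≤ ℓ) {a n : Fin ℓ → ℕ} {c : Fin k → ℕ}
    (ha : ∀ i, 0 < a i) (hn : ∀ i, 0 < n i) (hcop : Pairwise (Function.onFun Nat.Coprime a)) :
    let α : ℕ := Finset.univ.lcm a
    let m : Fin ℓ → ℕ := fun i => n i * α / a i
    let β : ℕ := ∑ i, m i
    ∀ (p q : PtB k × PtB k) (t : Fin ℓ → ℂ), (∀ i, t i ≠ 0) →
      actC ℓ k a n c t (phiC ℓ k m β p) = phiC ℓ k m β q →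
      ∃ s : ℂ, s ≠ 0 ∧
        actC ℓ k a n c t (phiC ℓ k m β p)
          = actC ℓ k a n c (fun i => s ^ (α / a i)) (phiC ℓ k m β p) := by
  intro α m β p q t ht h
  have hdvd (i : Fin ℓ) : a i ∣ α := Finset.dvd_lcm (Finset.mem_univ i)
  have hα : 0 < α := Nat.pos_of_ne_zero (Finset.lcm_ne_zero_iff.mpr fun i _ => (ha i).ne')
  have hm (i : Fin ℓ) : 0 < m i :=
    Nat.div_pos (Nat.le_of_dvd (Nat.mul_pos (hn i) hα) ((hdvd i).mul_left _)) (ha i)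
  have hβ : 0 < β := Finset.sum_pos (fun i _ => hm i) ⟨⟨0, hℓ⟩, Finset.mem_univ _⟩
  lift t to Fin ℓ → ℂˣ using fun i => (ht i).isUnit
  by_cases hp : p.1.1 = 0 ∧ p.2.1 = 0
  · obtain ⟨s, hs⟩ := IsAlgClosed.exists_pow_nat_eq (∏ i, (t i : ℂ) ^ n i) hβ
    have hs0 : s ^ β ≠ 0 := hs ▸ Finset.prod_ne_zero_iff.mpr fun i _ => pow_ne_zero _ (ht i)
    refine ⟨s, (pow_ne_zero_iff hβ.ne').mp hs0, ?_⟩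
    exact actC_phiC_congr_of_prod_pow_eq hp.1 hp.2 (by rw [prod_pow_div_pow_eq_pow_sum hdvd, hs])
  · have hpow (i j : Fin ℓ) : t i ^ a i = t j ^ a j :=
      Units.ext (by exact_mod_cast pow_eq_pow_of_actC_phiC_eq hm hβ hp h i j)
    obtain ⟨s, hs⟩ := exists_forall_pow_univ_lcm_div_eq ha hcop hpow
    exact ⟨s, s.ne_zero, by simp only [← hs, Units.val_pow_eq_pow_val, α]⟩

/-- Seshadri-section property: if `(z,w) ∈ N_B` and `t ∈ (ℂ^×)^ℓ` are such
that `t·φ_ℂ(z,w)` again lies in `S = φ_ℂ(N_B)`, then `t·φ_ℂ(z,w)` is obtained from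
`φ_ℂ(z,w)` by an element of the one-parameter subgroup `{(s^{α/a_1},…,s^{α/a_ℓ}) : s ∈ ℂ^×}`. -/
theorem stmt4 (ℓ k : ℕ) (hℓ : 1 ≤ ℓ) (hk : 1 ≤ k)
    (a n : Fin ℓ → ℕ) (c : Fin k → ℕ)
    (ha : ∀ i, 0 < a i) (hn : ∀ i, 0 < n i) (hc : ∀ r, 0 < c r)
    (hF1 : ∀ i j, i ≠ j → Nat.gcd (a i) (a j) = 1)
    (hF2 : ∀ i, ∃ r, Nat.gcd (a i) (c r * n i) = 1) :
    let α : ℕ := Finset.univ.lcm a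
    let m : Fin ℓ → ℕ := fun i => n i * α / a i
    let β : ℕ := ∑ i, m i
    ∀ p : PtB k × PtB k, memNB k α β c p →
      ∀ t : Fin ℓ → ℂ, (∀ i, t i ≠ 0) →
        (∃ q : PtB k × PtB k, memNB k α β c q ∧
            actC ℓ k a n c t (phiC ℓ k m β p) = phiC ℓ k m β q) →
        ∃ s : ℂ, s ≠ 0 ∧
          actC ℓ k a n c t (phiC ℓ k m β p)
            = actC ℓ k a n c (fun i => s ^ (α / a i)) (phiC ℓ k m β p) := by
  rintro α m β p - t ht ⟨q, -, h⟩
  exact stmt4_general hℓ ha hn hF1 p q t ht h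
end

section
/- Assume the faithfulness condition (F). For t ∈ (ℂ^×)^ℓ, one has t·S = S (where S = φ_ℂ(N_B) and t·S denotes the image of S under the action of t) if and only if there exists s ∈ ℂ^× with t_i = s^{α/a_i} for every i = 1,…,ℓ. That is, the stabilizer N(S) = {t ∈ (ℂ^×)^ℓ : t·S = S} equals the one-parameter subgroup {(s^{α/a_1},…,s^{α/a_ℓ}) : s ∈ ℂ^×}. -/
open Complex

/-- The section `S = φ_ℂ(N_B) ⊆ ℂ^{ℓ+k} × ℂ^{ℓ+k}`. -/
noncomputable def secS (ℓ k : ℕ) (α β : ℕ) (m : Fin ℓ → ℕ) (c : Fin k → ℕ) :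
    Set (PtA ℓ k × PtA ℓ k) :=
  {p | ∃ q : PtB k × PtB k, memNB k α β c q ∧ p = phiC ℓ k m β q}

/-!
Entry `i` of `t · φ_ℂ(z, w)` carries `w_1` multiplied by `t_i ^ a_i`, up to the nonzero constant
`√(m_i/β)`, and every point of `S` repeats its own `w_1` in all these entries; so stability of `S`
makes all the `t_i ^ a_i` equal. Conversely, if they agree, then `φ_ℂ` transports the action of
`t` from a rescaling of `ℂ^{k+1} × ℂ^{k+1}` which fixes every product `z_j w_j`, hence preserves
`N_B`.

It remains to solve `t_i = s ^ (α / a_i)` when all the `t_i ^ a_i` agree. Coprimality gives a Bézout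
relation `∑ e_i (α / a_i) = 1`, and `s = ∏ t_i ^ e_i` is a solution.
-/

section Arithmetic

open Finset

theorem zpow_sum {ι G : Type*} [CommGroup G] (x : G) (s : Finset ι) (f : ι → ℤ) :
    x ^ ∑ i ∈ s, f i = ∏ i ∈ s, x ^ f i :=
  map_prod (zpowersHom G x) (fun i => Multiplicative.ofAdd (f i)) s

variable {ι : Type*} [Fintype ι] [DecidableEq ι] {a : ι → ℕ}

theorem univ_lcm_div_eq_prod_compl (hcop : Pairwise (Function.onFun Nat.Coprime a)) {i : ι}
    (hi : 0 < a i) : univ.lcm a / a i = ∏ j ∈ {i}ᶜ, a j := by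
  rw [lcm_eq_prod (hcop.set_pairwise _), Fintype.prod_eq_mul_prod_compl i,
    Nat.mul_div_cancel_left _ hi]

theorem exists_int_sum_mul_prod_compl_eq_one [Nonempty ι]
    (hcop : Pairwise (Function.onFun Nat.Coprime a)) :
    ∃ e : ι → ℤ, ∑ i, e i * (∏ j ∈ {i}ᶜ, a j : ℕ) = 1 := by
  have hcopℤ : Pairwise (Function.onFun IsCoprime fun i => (a i : ℤ)) :=
    fun _ _ hij => Nat.isCoprime_iff_coprime.mpr (hcop hij)
  simpa only [Nat.cast_prod] using exists_sum_eq_one_iff_pairwise_coprime'.mpr hcopℤ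

theorem pow_prod_compl_comm {M : Type*} [Monoid M] {t : ι → M}
    (h : ∀ i j, t i ^ a i = t j ^ a j) (i j : ι) :
    t i ^ ∏ l ∈ {j}ᶜ, a l = t j ^ ∏ l ∈ {i}ᶜ, a l := by
  obtain rfl | hij := eq_or_ne i j
  · rfl
  have hj : ∏ l ∈ {j}ᶜ, a l = a i * ∏ l ∈ {j}ᶜ \ {i}, a l := by
    rw [← prod_sdiff (singleton_subset_iff.mpr (by simpa using hij)), prod_singleton, mul_comm]
  have hi : ∏ l ∈ {i}ᶜ, a l = a j * ∏ l ∈ {i}ᶜ \ {j}, a l := by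
    rw [← prod_sdiff (singleton_subset_iff.mpr (by simpa using hij.symm)), prod_singleton,
      mul_comm]
  have hcompl : ({j}ᶜ \ {i} : Finset ι) = {i}ᶜ \ {j} := by
    simp only [sdiff_eq_inter_compl, inter_comm]
  rw [hj, hi, hcompl, pow_mul, pow_mul, h i j]

theorem exists_forall_eq_pow_prod_compl {G : Type*} [CommGroup G] {t : ι → G}
    (hcop : Pairwise (Function.onFun Nat.Coprime a))
    (h : ∀ i j, t i ^ a i = t j ^ a j) : ∃ s : G, ∀ i, t i = s ^ ∏ j ∈ {i}ᶜ, a j := by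
  cases isEmpty_or_nonempty ι
  · exact ⟨1, isEmptyElim⟩
  obtain ⟨e, he⟩ := exists_int_sum_mul_prod_compl_eq_one hcop
  refine ⟨∏ i, t i ^ e i, fun j => ?_⟩
  symm
  calc (∏ i, t i ^ e i) ^ ∏ l ∈ {j}ᶜ, a l
      = ∏ i, (t i ^ ∏ l ∈ {j}ᶜ, a l) ^ e i := by
        rw [← prod_pow]
        simp only [← zpow_natCast, zpow_comm]
    _ = ∏ i, (t j ^ ∏ l ∈ {i}ᶜ, a l) ^ e i := by
        simp only [pow_prod_compl_comm h _ j]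
    _ = t j ^ ∑ i, e i * (∏ l ∈ {i}ᶜ, a l : ℕ) := by
        simp only [← zpow_natCast, ← zpow_mul, mul_comm, zpow_sum]
    _ = t j := by rw [he, zpow_one]

end Arithmetic

section Shell

variable {ℓ k : ℕ} {α β : ℕ} {m a n : Fin ℓ → ℕ} {c : Fin k → ℕ}

/-- The action of the torus `ℂ^× × (ℂ^×)^k` on pairs `(z, w)` of points of `ℂ^{k+1}`, with opposite
weights on `z` and `w`. The first factor acts on `z` through its inverse and the others act on `w`
through their inverses, which is the sign convention of `actC`. -/
def scaleB (w : ℂˣ) (χ : Fin k → ℂˣ) : Equiv.Perm (PtB k × PtB k) :=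
  (w⁻¹.mulLeft.prodCongr (Equiv.piCongrRight fun r => (χ r).mulLeft)).prodCongr
    (w.mulLeft.prodCongr (Equiv.piCongrRight fun r => (χ r)⁻¹.mulLeft))

theorem scaleB_apply (w : ℂˣ) (χ : Fin k → ℂˣ) (q : PtB k × PtB k) :
    scaleB w χ q =
      (((w : ℂ)⁻¹ * q.1.1, fun r => χ r * q.1.2 r),
        (w * q.2.1, fun r => (χ r : ℂ)⁻¹ * q.2.2 r)) := by
  simp only [← Units.val_inv_eq_inv_val]
  rfl

theorem memNB_scaleB (w : ℂˣ) (χ : Fin k → ℂˣ) (q : PtB k × PtB k) :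
    memNB k α β c (scaleB w χ q) ↔ memNB k α β c q := by
  have hfirst : α * ((w : ℂ)⁻¹ * q.1.1) * (w * q.2.1) = α * q.1.1 * q.2.1 := by
    field_simp
  have hrest (r) :
      (c r : ℂ) * (χ r * q.1.2 r) * ((χ r : ℂ)⁻¹ * q.2.2 r) = c r * q.1.2 r * q.2.2 r := by
    field_simp
  simp only [memNB, scaleB_apply, neg_mul, hfirst, hrest]

theorem image_scaleB_setOf_memNB (w : ℂˣ) (χ : Fin k → ℂˣ) :
    scaleB w χ '' {q | memNB k α β c q} = {q | memNB k α β c q} := by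
  rw [Equiv.image_eq_preimage_symm]
  ext q
  simpa using (memNB_scaleB w χ ((scaleB w χ).symm q)).symm

theorem secS_eq_image : secS ℓ k α β m c = phiC ℓ k m β '' {q | memNB k α β c q} := by
  ext p
  simp only [secS, Set.mem_image, Set.mem_ofPred_eq, eq_comm]

theorem actC_phiC {t : Fin ℓ → ℂˣ} {w : ℂˣ} (h : ∀ i, t i ^ a i = w) (q : PtB k × PtB k) :
    actC ℓ k a n c (fun i => t i) (phiC ℓ k m β q) =
      phiC ℓ k m β (scaleB w (fun r => ∏ i, t i ^ (c r * n i)) q) := by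
  have hw (i) : (t i : ℂ) ^ a i = w := by rw [← h i, Units.val_pow_eq_pow_val]
  simp [actC, phiC, phiMap, scaleB_apply, hw, mul_left_comm]

theorem image_actC_secS {t : Fin ℓ → ℂˣ} {w : ℂˣ} (h : ∀ i, t i ^ a i = w) :
    actC ℓ k a n c (fun i => t i) '' secS ℓ k α β m c = secS ℓ k α β m c := by
  rw [secS_eq_image, Set.image_image]
  simp only [actC_phiC h]
  rw [← Set.image_image, image_scaleB_setOf_memNB]

theorem pow_mul_eq_of_actC_phiC_eq_phiC {t : Fin ℓ → ℂ} {p q : PtB k × PtB k}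
    (h : actC ℓ k a n c t (phiC ℓ k m β p) = phiC ℓ k m β q) {i : Fin ℓ}
    (hi : 0 < (m i / β : ℝ)) : t i ^ a i * p.2.1 = q.2.1 := by
  have hsqrt : (√(m i / β : ℝ) : ℂ) ≠ 0 := ofReal_ne_zero.mpr (Real.sqrt_ne_zero'.mpr hi)
  have hentry : t i ^ a i * (√(m i / β : ℝ) * p.2.1) = √(m i / β : ℝ) * q.2.1 := by
    simpa only [actC, phiC, phiMap, zpow_natCast] using congrFun (congrArg (·.2.1) h) i
  exact mul_left_cancel₀ hsqrt (by rw [← hentry, mul_left_comm])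

theorem pow_eq_pow_of_mapsTo_actC_secS {t : Fin ℓ → ℂ} (hmβ : ∀ i, 0 < (m i / β : ℝ))
    (hS : Set.MapsTo (actC ℓ k a n c t) (secS ℓ k α β m c) (secS ℓ k α β m c)) (i j : Fin ℓ) :
    t i ^ a i = t j ^ a j := by
  have hmem : phiC ℓ k m β ((0, 0), (1, 0)) ∈ secS ℓ k α β m c :=
    ⟨((0, 0), (1, 0)), by simp [memNB], rfl⟩
  obtain ⟨q, -, hq⟩ := hS hmem
  have hpow (i) : t i ^ a i = q.2.1 := by
    simpa only [mul_one] using pow_mul_eq_of_actC_phiC_eq_phiC hq (hmβ i)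
  rw [hpow i, hpow j]

end Shell

theorem stmt5_general {ℓ k : ℕ} {a n : Fin ℓ → ℕ} (c : Fin k → ℕ)
    (ha : ∀ i, 0 < a i) (hn : ∀ i, 0 < n i) (hcop : Pairwise (Function.onFun Nat.Coprime a)) :
    let α : ℕ := Finset.univ.lcm a
    let m : Fin ℓ → ℕ := fun i => n i * α / a i
    let β : ℕ := ∑ i, m i
    ∀ t : Fin ℓ → ℂ, (∀ i, t i ≠ 0) →
      ((actC ℓ k a n c t '' secS ℓ k α β m c) = secS ℓ k α β m c
        ↔ ∃ s : ℂ, s ≠ 0 ∧ ∀ i, t i = s ^ (α / a i)) := by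
  intro α m β t ht
  lift t to Fin ℓ → ℂˣ using fun i => (ht i).isUnit
  have hdvd (i) : a i ∣ α := Finset.dvd_lcm (Finset.mem_univ i)
  constructor
  · intro hS
    have hα : 0 < α := Nat.pos_of_ne_zero (by simpa [α, Finset.lcm_eq_zero_iff] using
      fun i => (ha i).ne')
    have hm (i) : 0 < m i := Nat.div_pos
      (Nat.le_of_dvd (Nat.mul_pos (hn i) hα) ((hdvd i).mul_left _)) (ha i)
    have hβ (i) : 0 < β := (hm i).trans_le (Finset.single_le_sum_of_canonicallyOrdered
      (Finset.mem_univ i))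
    have hmβ (i) : 0 < (m i / β : ℝ) := div_pos (mod_cast hm i) (mod_cast hβ i)
    have hpow := pow_eq_pow_of_mapsTo_actC_secS hmβ (Set.mapsTo_iff_image_subset.mpr hS.subset)
    obtain ⟨s, hs⟩ := exists_forall_eq_pow_prod_compl (t := t) hcop
      fun i j => Units.ext (by simpa using hpow i j)
    refine ⟨s, s.ne_zero, fun i => ?_⟩
    simpa [α, univ_lcm_div_eq_prod_compl hcop (ha i)] using congrArg Units.val (hs i)
  · rintro ⟨s, hs, hts⟩
    lift s to ℂˣ using hs.isUnit
    refine image_actC_secS (w := s ^ α) fun i => Units.ext ?_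
    simpa [← pow_mul, Nat.div_mul_cancel (hdvd i)] using congrArg (· ^ a i) (hts i)

/-- for `t ∈ (ℂ^×)^ℓ`, `t·S = S` if and only if `t` lies in the
one-parameter subgroup `{(s^{α/a_1},…,s^{α/a_ℓ}) : s ∈ ℂ^×}`. -/
theorem stmt5 (ℓ k : ℕ) (hℓ : 1 ≤ ℓ) (hk : 1 ≤ k)
    (a n : Fin ℓ → ℕ) (c : Fin k → ℕ)
    (ha : ∀ i, 0 < a i) (hn : ∀ i, 0 < n i) (hc : ∀ r, 0 < c r)
    (hF1 : ∀ i j, i ≠ j → Nat.gcd (a i) (a j) = 1)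
    (hF2 : ∀ i, ∃ r, Nat.gcd (a i) (c r * n i) = 1) :
    let α : ℕ := Finset.univ.lcm a
    let m : Fin ℓ → ℕ := fun i => n i * α / a i
    let β : ℕ := ∑ i, m i
    ∀ t : Fin ℓ → ℂ, (∀ i, t i ≠ 0) →
      ((actC ℓ k a n c t '' secS ℓ k α β m c) = secS ℓ k α β m c
        ↔ ∃ s : ℂ, s ≠ 0 ∧ ∀ i, t i = s ^ (α / a i)) :=
  stmt5_general c ha hn fun i j => hF1 i j
end

section
/- Assume Type I_k (c_1 = ⋯ = c_k = 1) and the faithfulness condition (F). Let P_A = ℂ[u_1,…,u_{ℓ+k}, v_1,…,v_{ℓ+k}] and P_B = ℂ[z_1,…,z_{k+1}, w_1,…,w_{k+1}], with invariant subalgebras P_A^{inv} (for the (ℂ^×)^ℓ-action with weight matrix A) and P_B^{inv} (for the ℂ^×-action with weight row B = (−α, β, …, β)). Then there is a well-defined ℂ-algebra homomorphism Φ : P_A^{inv} → P_B^{inv} determined on the generators by Φ(u_i v_i) = (m_i/β)·z_1 w_1 for i = 1,…,ℓ, Φ(u_{ℓ+i} v_{ℓ+j}) = z_{1+i} w_{1+j}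 for 1 ≤ i,j ≤ k, Φ(q_s) = C·z_1^{β}·∏_{j=1}^k z_{1+j}^{s_j} and Φ(q̄_s) = C·w_1^{β}·∏_{j=1}^k w_{1+j}^{s_j} for each s ∈ ℕ^k with |s| = α, where C = √(β^{−β}·∏_{j=1}^ℓ m_j^{m_j}), q_s = (∏_{i=1}^ℓ u_i^{m_i})(∏_{j=1}^k u_{ℓ+j}^{s_j}) and q̄_s = (∏_{i=1}^ℓ v_i^{m_i})(∏_{j=1}^k v_{ℓ+j}^{s_j}); and Φ descends to a degree-preserving isomorphism of graded ℂ-algebras P_A^{inv}/(J_{A,1},…,J_{A,ℓ}) → P_B^{inv}/(J_B), where J_{A,i} = −a_i u_i v_i + n_i Σ_{j=1}^k u_{ℓ+j} v_{ℓ+j} and J_B = −α z_1 w_1 + β Σ_{j=1}^k z_{1+j} w_{1+j}. -/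
open Complex MvPolynomial

/-- The polynomial ring `P_A = ℂ[u, v]`, `u, v` indexed by `Fin ℓ ⊕ Fin k`. -/
abbrev PA (ℓ k : ℕ) := MvPolynomial ((Fin ℓ ⊕ Fin k) ⊕ (Fin ℓ ⊕ Fin k)) ℂ

/-- The polynomial ring `P_B = ℂ[z, w]`, `z, w` indexed by `Unit ⊕ Fin k`
(`Sum.inl ()` is `z_1` resp. `w_1`). -/
abbrev PB (k : ℕ) := MvPolynomial ((Unit ⊕ Fin k) ⊕ (Unit ⊕ Fin k)) ℂ

/-- The substitution action of `t ∈ (ℂ^×)^ℓ` on `P_A` for the Type I_k weight matrix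
`A = [diag(-a_1,…,-a_ℓ), n, …, n]`. -/
noncomputable def actPA (ℓ k : ℕ) (a n : Fin ℓ → ℕ) (t : Fin ℓ → ℂ) :
    PA ℓ k →ₐ[ℂ] PA ℓ k :=
  aeval fun x => match x with
    | Sum.inl (Sum.inl i) => C (t i ^ (-(a i : ℤ))) * X (Sum.inl (Sum.inl i))
    | Sum.inl (Sum.inr j) => C (∏ i, t i ^ n i) * X (Sum.inl (Sum.inr j))
    | Sum.inr (Sum.inl i) => C (t i ^ (a i : ℤ)) * X (Sum.inr (Sum.inl i))
    | Sum.inr (Sum.inr j) => C ((∏ i, t i ^ n i)⁻¹) * X (Sum.inr (Sum.inr j))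

/-- The substitution action of `t ∈ ℂ^×` on `P_B` for the weight row `B = (-α, β, …, β)`. -/
noncomputable def actPB (k : ℕ) (α β : ℕ) (t : ℂ) : PB k →ₐ[ℂ] PB k :=
  aeval fun x => match x with
    | Sum.inl (Sum.inl _) => C (t ^ (-(α : ℤ))) * X (Sum.inl (Sum.inl ()))
    | Sum.inl (Sum.inr j) => C (t ^ (β : ℤ)) * X (Sum.inl (Sum.inr j))
    | Sum.inr (Sum.inl _) => C (t ^ (α : ℤ)) * X (Sum.inr (Sum.inl ()))
    | Sum.inr (Sum.inr j) => C (t ^ (-(β : ℤ))) * X (Sum.inr (Sum.inr j))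

/-- The subalgebra of `(ℂ^×)^ℓ`-invariant polynomials of `P_A`. -/
noncomputable def invPA (ℓ k : ℕ) (a n : Fin ℓ → ℕ) : Subalgebra ℂ (PA ℓ k) where
  carrier := {f | ∀ t : Fin ℓ → ℂ, (∀ i, t i ≠ 0) → actPA ℓ k a n t f = f}
  mul_mem' hf hg t ht := by rw [map_mul, hf t ht, hg t ht]
  add_mem' hf hg t ht := by rw [map_add, hf t ht, hg t ht]
  one_mem' t ht := map_one _
  zero_mem' t ht := map_zero _
  algebraMap_mem' r t ht := (actPA ℓ k a n t).commutes r

/-- The subalgebra of `ℂ^×`-invariant polynomials of `P_B`. -/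
noncomputable def invPB (k : ℕ) (α β : ℕ) : Subalgebra ℂ (PB k) where
  carrier := {f | ∀ t : ℂ, t ≠ 0 → actPB k α β t f = f}
  mul_mem' hf hg t ht := by rw [map_mul, hf t ht, hg t ht]
  add_mem' hf hg t ht := by rw [map_add, hf t ht, hg t ht]
  one_mem' t ht := map_one _
  zero_mem' t ht := map_zero _
  algebraMap_mem' r t ht := (actPB k α β t).commutes r

/-- The substitution `Φ₀ : P_A → P_B` inducing the map `Φ` on the generators:
`u_i ↦ √(m_i/β) z_1`, `v_i ↦ √(m_i/β) w_1`, `u_{ℓ+j} ↦ z_{1+j}`, `v_{ℓ+j} ↦ w_{1+j}`. -/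
noncomputable def PhiZero (ℓ k : ℕ) (m : Fin ℓ → ℕ) (β : ℕ) : PA ℓ k →ₐ[ℂ] PB k :=
  aeval fun x => match x with
    | Sum.inl (Sum.inl i) =>
        C ((Real.sqrt ((m i : ℝ) / (β : ℝ)) : ℝ) : ℂ) * X (Sum.inl (Sum.inl ()))
    | Sum.inl (Sum.inr j) => X (Sum.inl (Sum.inr j))
    | Sum.inr (Sum.inl i) =>
        C ((Real.sqrt ((m i : ℝ) / (β : ℝ)) : ℝ) : ℂ) * X (Sum.inr (Sum.inl ()))
    | Sum.inr (Sum.inr j) => X (Sum.inr (Sum.inr j))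

/-- The moment polynomials `J_{A,i} = -a_i u_i v_i + n_i Σ_j u_{ℓ+j} v_{ℓ+j}`. -/
noncomputable def JA (ℓ k : ℕ) (a n : Fin ℓ → ℕ) (i : Fin ℓ) : PA ℓ k :=
  -(C ((a i : ℂ)) * X (Sum.inl (Sum.inl i)) * X (Sum.inr (Sum.inl i)))
    + C ((n i : ℂ)) * ∑ j, X (Sum.inl (Sum.inr j)) * X (Sum.inr (Sum.inr j))

/-- The moment polynomial `J_B = -α z_1 w_1 + β Σ_j z_{1+j} w_{1+j}`. -/
noncomputable def JB (k : ℕ) (α β : ℕ) : PB k :=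
  -(C ((α : ℂ)) * X (Sum.inl (Sum.inl ())) * X (Sum.inr (Sum.inl ())))
    + C ((β : ℂ)) * ∑ j, X (Sum.inl (Sum.inr j)) * X (Sum.inr (Sum.inr j))

/-- The ideal of `P_A^{inv}` generated by the moment polynomials. -/
noncomputable def idealA (ℓ k : ℕ) (a n : Fin ℓ → ℕ) : Ideal (invPA ℓ k a n) :=
  Ideal.span {f : invPA ℓ k a n | ∃ i, (f : PA ℓ k) = JA ℓ k a n i}

/-- The ideal of `P_B^{inv}` generated by the moment polynomial. -/
noncomputable def idealB (k : ℕ) (α β : ℕ) : Ideal (invPB k α β) :=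
  Ideal.span {f : invPB k α β | (f : PB k) = JB k α β}

/-!
Both invariant rings have bases of monomials, those whose exponents have weight zero, and `PhiZero`
sends each such monomial to a nonzero multiple of another. If two invariant monomials of `P_A` have
proportional images, then each is a common invariant monomial times a product of factors `u_i v_i`,
with equally many factors on both sides. Modulo the `J_{A,i}` every `u_i v_i` is `m_i/β` times one
and the same class, and `m_i/β` is also the factor by which `PhiZero` multiplies it; hence the
kernel of `P_A^{inv} → P_B^{inv}` lies in the ideal of the `J_{A,i}`, which is carried onto the
ideal of `J_B`. An exponent of weight zero for `B` lifts to one for `A` as soon as `α ∣ β s` implies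
`a_i ∣ n_i s`, which follows from (F) because each `a_i` is then prime to `β`.
-/

section LinearAlgebra

variable {K V W U ι κ : Type*} [Field K] [AddCommGroup V] [Module K V] [AddCommGroup W] [Module K W]
  [AddCommGroup U] [Module K U] {bV : Module.Basis ι K V} {bW : Module.Basis κ K W}
  {φ : V →ₗ[K] W} {p : ι → κ} {c : ι → K}

lemma surjective_of_map_basis_eq_smul (hφ : ∀ i, φ (bV i) = c i • bW (p i))
    (hc : ∀ i, c i ≠ 0) (hp : Function.Surjective p) : Function.Surjective φ := by
  rw [← LinearMap.range_eq_top, eq_top_iff, ← bW.span_eq, Submodule.span_le]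
  rintro _ ⟨k, rfl⟩
  obtain ⟨i, rfl⟩ := hp k
  exact ⟨(c i)⁻¹ • bV i, by rw [map_smul, hφ, inv_smul_smul₀ (hc i)]⟩

lemma ker_le_ker_of_map_basis_eq_smul (hφ : ∀ i, φ (bV i) = c i • bW (p i))
    (hc : ∀ i, c i ≠ 0) {q : V →ₗ[K] U}
    (hq : ∀ i j, p i = p j → c j • q (bV i) = c i • q (bV j)) :
    LinearMap.ker φ ≤ LinearMap.ker q := by
  have hfactors : (fun i => (c i)⁻¹ • q (bV i)).FactorsThrough p := fun i j hij => by
    rw [inv_smul_eq_iff₀ (hc i), smul_comm, ← hq i j hij, inv_smul_smul₀ (hc j)]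
  let r : W →ₗ[K] U := bW.constr K (Function.extend p (fun i => (c i)⁻¹ • q (bV i)) 0)
  have hr : q = r ∘ₗ φ := bV.ext fun i => by
    rw [LinearMap.comp_apply, hφ, map_smul, bW.constr_basis, hfactors.extend_apply,
      smul_inv_smul₀ (hc i)]
  exact hr ▸ LinearMap.ker_le_ker_comp φ r

end LinearAlgebra

section Quotient

variable {K A B : Type*} [CommRing K] [CommRing A] [CommRing B] [Algebra K A] [Algebra K B]

lemma exists_quotientAlgEquiv_of_surjective {φ : A →ₐ[K] B} (hφ : Function.Surjective φ)
    {I : Ideal A} {J : Ideal B} (hmap : I.map φ = J) (hker : RingHom.ker φ ≤ I) :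
    ∃ e : (A ⧸ I) ≃ₐ[K] (B ⧸ J),
      ∀ x, e (Ideal.Quotient.mk I x) = Ideal.Quotient.mk J (φ x) := by
  have hcomap : J.comap φ = I := by
    rw [← hmap, Ideal.comap_map_of_surjective' φ hφ, sup_eq_left.2 hker]
  exact ⟨AlgEquiv.ofBijective (Ideal.quotientMapₐ J φ hcomap.ge)
    ⟨Ideal.quotientMap_injective' (H := hcomap.ge) hcomap.le,
      Ideal.quotientMap_surjective (H := hcomap.ge) hφ⟩, fun _ => rfl⟩

end Quotient

section ScaledRename

variable {σ τ R : Type*} [CommRing R]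

/-- The substitution `x ↦ w x · π x`. It covers both the torus actions (with `π = id`) and
`PhiZero`. -/
noncomputable def scaledRename (w : σ → R) (π : σ → τ) : MvPolynomial σ R →ₐ[R] MvPolynomial τ R :=
  aeval fun x => C (w x) * X (π x)

lemma scaledRename_monomial (w : σ → R) (π : σ → τ) (D : σ →₀ ℕ) (r : R) :
    scaledRename w π (monomial D r) =
      monomial (D.mapDomain π) (D.prod (fun x e => w x ^ e) * r) := by
  rw [scaledRename, aeval_monomial, monomial_eq, Finsupp.prod_mapDomain_index (fun _ => pow_zero _)
    (fun _ _ _ => pow_add _ _ _)]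
  simp only [mul_pow, Finsupp.prod_mul, C_mul, algebraMap_eq, ← map_pow, ← map_finsuppProd]
  ring

lemma coeff_scaledRename_id (w : σ → R) (D : σ →₀ ℕ) (f : MvPolynomial σ R) :
    coeff D (scaledRename w id f) = D.prod (fun x e => w x ^ e) * coeff D f := by
  classical
  induction f using MvPolynomial.induction_on' with
  | monomial E r =>
    rw [scaledRename_monomial, Finsupp.mapDomain_id, coeff_monomial, coeff_monomial]
    split_ifs with h
    · rw [h]
    · rw [mul_zero]
  | add f g hf hg => rw [map_add, coeff_add, hf, hg, coeff_add, mul_add]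

lemma scaledRename_id_eq_self_iff [IsDomain R] (w : σ → R) (f : MvPolynomial σ R) :
    scaledRename w id f = f ↔ ∀ D ∈ f.support, D.prod (fun x e => w x ^ e) = 1 := by
  simp only [MvPolynomial.ext_iff, coeff_scaledRename_id, mem_support_iff]
  refine forall_congr' fun D => ?_
  by_cases hD : coeff D f = 0
  · simp [hD]
  · simp [hD, mul_eq_right₀]

lemma scaledRename_mem_restrictSupport (w : σ → R) {π : σ → τ} {E : Set (σ →₀ ℕ)}
    {F : Set (τ →₀ ℕ)} (h : Set.MapsTo (Finsupp.mapDomain π) E F) {f : MvPolynomial σ R}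
    (hf : f ∈ restrictSupport R E) : scaledRename w π f ∈ restrictSupport R F := by
  rw [f.as_sum, map_sum]
  refine sum_mem fun D hD => ?_
  rw [scaledRename_monomial]
  exact (monomial_mem_restrictSupport R).2 (Or.inl (h (hf hD)))

lemma isHomogeneous_scaledRename (w : σ → R) (π : σ → τ) {f : MvPolynomial σ R} {d : ℕ}
    (hf : f.IsHomogeneous d) : (scaledRename w π f).IsHomogeneous d := by
  simpa only [scaledRename, one_mul] using hf.aeval _ fun x => isHomogeneous_C_mul_X (w x) (π x)

lemma homogeneousComponent_scaledRename (w : σ → R) (π : σ → τ) (d : ℕ) (f : MvPolynomial σ R) :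
    homogeneousComponent d (scaledRename w π f) = scaledRename w π (homogeneousComponent d f) := by
  induction f using MvPolynomial.induction_on' with
  | monomial D r =>
    have hD := isHomogeneous_monomial r (rfl : D.degree = D.degree)
    rw [homogeneousComponent_of_mem hD,
      homogeneousComponent_of_mem (isHomogeneous_scaledRename w π hD)]
    split_ifs
    · rfl
    · rw [map_zero]
  | add f g hf hg => simp only [map_add, hf, hg]

end ScaledRename

section MonomialSubalgebra

variable {σ R : Type*} [CommRing R] {S : Subalgebra R (MvPolynomial σ R)} {E : Set (σ →₀ ℕ)}

/-- The monomial basis of a subalgebra of polynomials that is spanned by monomials, those with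
exponents in `E`. -/
noncomputable def monomialBasis (hS : Subalgebra.toSubmodule S = restrictSupport R E) :
    Module.Basis E R S :=
  (basisRestrictSupport R E).map (LinearEquiv.ofEq _ _ hS.symm)

lemma coe_monomialBasis (hS : Subalgebra.toSubmodule S = restrictSupport R E) (D : E) :
    (monomialBasis hS D : MvPolynomial σ R) = monomial (D : σ →₀ ℕ) 1 :=
  congrArg AddMonoidAlgebra.ofCoeff (Finsupp.restrictSupportEquiv_symm_single E R D 1)

lemma homogeneousComponent_mem (hS : Subalgebra.toSubmodule S = restrictSupport R E)
    {f : MvPolynomial σ R} (hf : f ∈ S) (d : ℕ) : homogeneousComponent d f ∈ S := by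
  classical
  rw [← Subalgebra.mem_toSubmodule, hS, mem_restrictSupport_iff] at hf ⊢
  rw [support_homogeneousComponent]
  exact (Finset.coe_subset.2 (Finset.filter_subset _ _)).trans hf

end MonomialSubalgebra

section Exponents

/-- The labels `(u, v)` of the coordinates on the cotangent space of `K^(ι ⊕ κ)`: positions on the
left, momenta on the right. The tuple `(u_1, …, u_ℓ)` is indexed by `ι`, the tuple
`(u_{ℓ+1}, …, u_{ℓ+k})` by `κ`. The row `B` is the case `ι = Unit`. -/
abbrev PhaseVar (ι κ : Type*) := (ι ⊕ κ) ⊕ (ι ⊕ κ)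

/-- The exponent of a position minus that of the conjugate momentum. -/
def netDegree {τ : Type*} (D : τ ⊕ τ →₀ ℕ) (x : τ) : ℤ :=
  D (Sum.inl x) - D (Sum.inr x)

/-- The exponents of the monomials of weight zero for the weight matrix
`[diag(-a), n, …, n]`, that is, of the invariant monomials. -/
def IsWeightZero {ι κ : Type*} [Fintype κ] (a n : ι → ℕ) (D : PhaseVar ι κ →₀ ℕ) : Prop :=
  ∀ i, (a i : ℤ) * netDegree D (Sum.inl i) = n i * ∑ j, netDegree D (Sum.inr j)

end Exponents

section Weights

variable {ι κ τ K : Type*} [Field K]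

lemma prod_zpow_eq_zpow_sum_s13 {x : K} (hx : x ≠ 0) (s : Finset τ) (e : τ → ℤ) :
    ∏ i ∈ s, x ^ e i = x ^ ∑ i ∈ s, e i := by
  induction s using Finset.cons_induction with
  | empty => simp
  | cons i s hi ih => rw [Finset.prod_cons, Finset.sum_cons, ih, zpow_add₀ hx]

variable [Fintype ι]

/-- The characters by which `t` acts on the positions, for the weight matrix
`[diag(-a), n, …, n]`. -/
def positionWeight (κ : Type*) (a n : ι → ℕ) (t : ι → K) : ι ⊕ κ → K :=
  Sum.elim (fun i => t i ^ (-(a i : ℤ))) fun _ => ∏ i, t i ^ n i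

/-- The characters by which `t` acts on all coordinates: momenta carry the inverse weights. -/
def torusWeight (κ : Type*) (a n : ι → ℕ) (t : ι → K) : PhaseVar ι κ → K :=
  Sum.elim (positionWeight κ a n t) (positionWeight κ a n t)⁻¹

lemma prod_elim_inv_pow [Fintype τ] {w : τ → K} (hw : ∀ x, w x ≠ 0) (D : τ ⊕ τ →₀ ℕ) :
    D.prod (fun x e => Sum.elim w w⁻¹ x ^ e) = ∏ x, w x ^ netDegree D x := by
  rw [Finsupp.prod_fintype _ _ fun _ => pow_zero _, Fintype.prod_sum_type,
    ← Finset.prod_mul_distrib]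
  refine Finset.prod_congr rfl fun x _ => ?_
  rw [netDegree, zpow_sub₀ (hw x), Sum.elim_inl, Sum.elim_inr, Pi.inv_apply, inv_pow,
    div_eq_mul_inv, zpow_natCast, zpow_natCast]

lemma positionWeight_ne_zero {a n : ι → ℕ} {t : ι → K} (ht : ∀ i, t i ≠ 0) (x : ι ⊕ κ) :
    positionWeight κ a n t x ≠ 0 := by
  rcases x with i | _
  · exact zpow_ne_zero _ (ht i)
  · exact Finset.prod_ne_zero_iff.2 fun i _ => pow_ne_zero _ (ht i)

variable [Fintype κ]

lemma prod_positionWeight_zpow {t : ι → K} (ht : ∀ i, t i ≠ 0) (a n : ι → ℕ) (e : ι ⊕ κ → ℤ) :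
    ∏ x, positionWeight κ a n t x ^ e x =
      ∏ i, t i ^ ((n i : ℤ) * ∑ j, e (Sum.inr j) - a i * e (Sum.inl i)) := by
  have hκ : ∏ j : κ, (∏ i, t i ^ n i) ^ e (Sum.inr j) =
      ∏ i, t i ^ ((n i : ℤ) * ∑ j, e (Sum.inr j)) := by
    simp only [← Finset.prod_zpow, ← zpow_natCast, ← zpow_mul]
    rw [Finset.prod_comm]
    refine Finset.prod_congr rfl fun i _ => ?_
    rw [Finset.mul_sum, prod_zpow_eq_zpow_sum_s13 (ht i)]
  simp only [Fintype.prod_sum_type, positionWeight, Sum.elim_inl, Sum.elim_inr, hκ, ← zpow_mul,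
    ← Finset.prod_mul_distrib, ← zpow_add₀ (ht _), neg_mul, neg_add_eq_sub]

lemma forall_prod_zpow_eq_one_iff [CharZero K] (e : ι → ℤ) :
    (∀ t : ι → K, (∀ i, t i ≠ 0) → ∏ i, t i ^ e i = 1) ↔ ∀ i, e i = 0 := by
  classical
  refine ⟨fun h i => ?_, fun h t _ => by simp [h]⟩
  have h2 := h (Function.update 1 i 2) fun j => by
    rcases eq_or_ne j i with rfl | hj <;> simp [*]
  rw [Fintype.prod_eq_single i fun j hj => by simp [hj], Function.update_self] at h2
  have h3 : (2 : ℚ) ^ e i = 1 := Rat.cast_injective (α := K) (by push_cast; exact h2)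
  exact (zpow_eq_one_iff_right₀ zero_le_two (by norm_num)).1 h3

lemma forall_prod_torusWeight_eq_one_iff [CharZero K] (a n : ι → ℕ) (D : PhaseVar ι κ →₀ ℕ) :
    (∀ t : ι → K, (∀ i, t i ≠ 0) → D.prod (fun x e => torusWeight κ a n t x ^ e) = 1) ↔
      IsWeightZero a n D := by
  have hzero : IsWeightZero a n D ↔
      ∀ i, n i * ∑ j, netDegree D (Sum.inr j) - a i * netDegree D (Sum.inl i) = 0 :=
    forall_congr' fun i => eq_comm.trans sub_eq_zero.symm
  rw [hzero, ← forall_prod_zpow_eq_one_iff (K := K)]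
  refine forall₂_congr fun t ht => ?_
  rw [torusWeight, prod_elim_inv_pow (positionWeight_ne_zero ht), prod_positionWeight_zpow ht]

lemma forall_scaledRename_torusWeight_eq_self_iff [CharZero K] (a n : ι → ℕ)
    (f : MvPolynomial (PhaseVar ι κ) K) :
    (∀ t : ι → K, (∀ i, t i ≠ 0) → scaledRename (torusWeight κ a n t) id f = f) ↔
      f ∈ restrictSupport K {D | IsWeightZero a n D} := by
  simp only [scaledRename_id_eq_self_iff, mem_restrictSupport_iff, Set.subset_def, Finset.mem_coe,
    Set.mem_ofPred_eq, ← forall_prod_torusWeight_eq_one_iff (K := K)]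
  tauto

end Weights

section Invariants

variable {ℓ k : ℕ}

lemma actPA_eq_scaledRename (a n : Fin ℓ → ℕ) (t : Fin ℓ → ℂ) :
    actPA ℓ k a n t = scaledRename (torusWeight (Fin k) a n t) id := by
  apply MvPolynomial.algHom_ext
  rintro ((i | j) | (i | j)) <;> simp [actPA, scaledRename, torusWeight, positionWeight]

lemma actPB_eq_scaledRename (α β : ℕ) (t : ℂ) :
    actPB k α β t =
      scaledRename (torusWeight (Fin k) (fun _ : Unit => α) (fun _ => β) fun _ => t) id := by
  apply MvPolynomial.algHom_ext
  rintro ((i | j) | (i | j)) <;> simp [actPB, scaledRename, torusWeight, positionWeight]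

lemma toSubmodule_invPA (a n : Fin ℓ → ℕ) :
    Subalgebra.toSubmodule (invPA ℓ k a n) = restrictSupport ℂ {D | IsWeightZero a n D} := by
  ext f
  rw [← forall_scaledRename_torusWeight_eq_self_iff]
  simp only [← actPA_eq_scaledRename]
  rfl

lemma toSubmodule_invPB (α β : ℕ) :
    Subalgebra.toSubmodule (invPB k α β) =
      restrictSupport ℂ {D | IsWeightZero (fun _ : Unit => α) (fun _ => β) D} := by
  ext f
  rw [← forall_scaledRename_torusWeight_eq_self_iff,
    ← (Equiv.funUnique Unit ℂ).symm.forall_congr_right]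
  simp only [Unique.forall_iff]
  exact forall₂_congr fun t _ => by rw [actPB_eq_scaledRename]; rfl

end Invariants

section Collapse

variable {ι κ K : Type*}

/-- The renaming `u_i ↦ z_1`, `u_{ℓ+j} ↦ z_{1+j}`, `v_i ↦ w_1`, `v_{ℓ+j} ↦ w_{1+j}` underlying
`PhiZero`. -/
def collapse (ι κ : Type*) : PhaseVar ι κ → PhaseVar Unit κ :=
  Sum.map (Sum.map (fun _ => ()) id) (Sum.map (fun _ => ()) id)

/-- The coefficients of a substitution that rescales `u_i` and `v_i` by `c i` and leaves the other
coordinates alone. -/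
def pairScale [One K] (κ : Type*) (c : ι → K) : PhaseVar ι κ → K :=
  Sum.elim (Sum.elim c 1) (Sum.elim c 1)

lemma mapDomain_collapse_inl_inl [Fintype ι] (D : PhaseVar ι κ →₀ ℕ) (x : Unit) :
    D.mapDomain (collapse ι κ) (Sum.inl (Sum.inl x)) = ∑ i, D (Sum.inl (Sum.inl i)) := by
  induction D using Finsupp.induction_linear with
  | zero => simp
  | add D E hD hE => simp [Finsupp.mapDomain_add, hD, hE, Finset.sum_add_distrib]
  | single y e =>
    classical
    rcases y with (i | j) | (i | j) <;>
      simp [collapse, Finsupp.mapDomain_single, Finsupp.single_apply]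

lemma mapDomain_collapse_inr_inl [Fintype ι] (D : PhaseVar ι κ →₀ ℕ) (x : Unit) :
    D.mapDomain (collapse ι κ) (Sum.inr (Sum.inl x)) = ∑ i, D (Sum.inr (Sum.inl i)) := by
  induction D using Finsupp.induction_linear with
  | zero => simp
  | add D E hD hE => simp [Finsupp.mapDomain_add, hD, hE, Finset.sum_add_distrib]
  | single y e =>
    classical
    rcases y with (i | j) | (i | j) <;>
      simp [collapse, Finsupp.mapDomain_single, Finsupp.single_apply]

lemma mapDomain_collapse_inl_inr (D : PhaseVar ι κ →₀ ℕ) (j : κ) :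
    D.mapDomain (collapse ι κ) (Sum.inl (Sum.inr j)) = D (Sum.inl (Sum.inr j)) := by
  induction D using Finsupp.induction_linear with
  | zero => simp
  | add D E hD hE => simp [Finsupp.mapDomain_add, hD, hE]
  | single y e =>
    classical
    rcases y with (i | j) | (i | j) <;>
      simp [collapse, Finsupp.mapDomain_single, Finsupp.single_apply]

lemma mapDomain_collapse_inr_inr (D : PhaseVar ι κ →₀ ℕ) (j : κ) :
    D.mapDomain (collapse ι κ) (Sum.inr (Sum.inr j)) = D (Sum.inr (Sum.inr j)) := by
  induction D using Finsupp.induction_linear with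
  | zero => simp
  | add D E hD hE => simp [Finsupp.mapDomain_add, hD, hE]
  | single y e =>
    classical
    rcases y with (i | j) | (i | j) <;>
      simp [collapse, Finsupp.mapDomain_single, Finsupp.single_apply]

lemma netDegree_mapDomain_collapse_inl [Fintype ι] (D : PhaseVar ι κ →₀ ℕ) (x : Unit) :
    netDegree (D.mapDomain (collapse ι κ)) (Sum.inl x) = ∑ i, netDegree D (Sum.inl i) := by
  simp only [netDegree, mapDomain_collapse_inl_inl, mapDomain_collapse_inr_inl, Nat.cast_sum,
    Finset.sum_sub_distrib]

lemma netDegree_mapDomain_collapse_inr (D : PhaseVar ι κ →₀ ℕ) (j : κ) :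
    netDegree (D.mapDomain (collapse ι κ)) (Sum.inr j) = netDegree D (Sum.inr j) := by
  simp only [netDegree, mapDomain_collapse_inl_inr, mapDomain_collapse_inr_inr]

variable [Fintype ι] {a n m : ι → ℕ} {α : ℕ}

lemma exists_nat_sub_eq_and_sum_eq [Nonempty ι] {y : ι → ℤ} {P Q : ℕ}
    (hy : (∀ i, 0 ≤ y i) ∨ ∀ i, y i ≤ 0) (hsum : ∑ i, y i = P - Q) :
    ∃ p q : ι → ℕ, (∀ i, (p i : ℤ) - q i = y i) ∧ ∑ i, p i = P ∧ ∑ i, q i = Q := by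
  classical
  wlog hnonneg : ∀ i, 0 ≤ y i generalizing y P Q
  · obtain ⟨q, p, hqp, hq, hp⟩ := this (y := -y) (P := Q) (Q := P)
      (hy.symm.imp (fun h i => neg_nonneg.2 (h i)) fun h i => neg_nonpos.2 (h i))
      (by simp only [Pi.neg_apply, Finset.sum_neg_distrib, hsum, neg_sub])
      fun i => neg_nonneg.2 (hy.resolve_left hnonneg i)
    exact ⟨p, q, fun i => by rw [← neg_sub, hqp, Pi.neg_apply, neg_neg], hp, hq⟩
  let q : ι → ℕ := Pi.single (Classical.arbitrary ι) Q
  have hq : ∑ i, q i = Q := Finset.sum_pi_single' _ _ _ |>.trans (if_pos (Finset.mem_univ _))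
  have hp : ((∑ i, ((y i).toNat + q i) : ℕ) : ℤ) = P := by
    simp [Finset.sum_add_distrib, hq, hnonneg, hsum]
  exact ⟨fun i => (y i).toNat + q i, q, fun i => by simp [hnonneg i], mod_cast hp, hq⟩

lemma mul_sum_eq_sum_mul {y : ι → ℤ} {s : ℤ} (ha : ∀ i, a i ≠ 0)
    (ham : ∀ i, a i * m i = n i * α) (h : ∀ i, a i * y i = n i * s) :
    α * ∑ i, y i = (∑ i, m i : ℕ) * s := by
  rw [Finset.mul_sum, Nat.cast_sum, Finset.sum_mul]
  refine Finset.sum_congr rfl fun i _ => ?_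
  have ham' : (a i : ℤ) * m i = n i * α := mod_cast ham i
  refine mul_left_cancel₀ (Nat.cast_ne_zero.2 (ha i) : (a i : ℤ) ≠ 0) ?_
  linear_combination (α : ℤ) * h i - s * ham'

variable [Fintype κ]

lemma IsWeightZero.mapDomain_collapse (ha : ∀ i, a i ≠ 0) (ham : ∀ i, a i * m i = n i * α)
    {D : PhaseVar ι κ →₀ ℕ} (hD : IsWeightZero a n D) :
    IsWeightZero (fun _ => α) (fun _ => ∑ i, m i) (D.mapDomain (collapse ι κ)) := fun _ => by
  simp only [netDegree_mapDomain_collapse_inl, netDegree_mapDomain_collapse_inr,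
    mul_sum_eq_sum_mul ha ham hD]

lemma exists_isWeightZero_mapDomain_collapse_eq [Nonempty ι] (ha : ∀ i, a i ≠ 0) (hα : α ≠ 0)
    (ham : ∀ i, a i * m i = n i * α)
    (hdvd : ∀ s : ℕ, α ∣ (∑ i, m i) * s → ∀ i, a i ∣ n i * s) {E : PhaseVar Unit κ →₀ ℕ}
    (hE : IsWeightZero (fun _ => α) (fun _ => ∑ i, m i) E) :
    ∃ D : PhaseVar ι κ →₀ ℕ, IsWeightZero a n D ∧ D.mapDomain (collapse ι κ) = E := by
  set s : ℤ := ∑ j, netDegree E (Sum.inr j) with hs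
  have hE' : α * netDegree E (Sum.inl ()) = (∑ i, m i : ℕ) * s := hE ()
  have hdvd' : ∀ i, (a i : ℤ) ∣ n i * s := fun i => by
    have := hdvd s.natAbs (by
      simpa only [Int.natAbs_mul, Int.natAbs_natCast] using Int.natCast_dvd.1 (Dvd.intro _ hE')) i
    simpa only [Int.natCast_dvd, Int.natAbs_mul, Int.natAbs_natCast] using this
  choose y hy using hdvd'
  have hsum : ∑ i, y i = E (Sum.inl (Sum.inl ())) - E (Sum.inr (Sum.inl ())) :=
    mul_left_cancel₀ (Nat.cast_ne_zero.2 hα : (α : ℤ) ≠ 0)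
      ((mul_sum_eq_sum_mul ha ham fun i => (hy i).symm).trans hE'.symm)
  have hsign : (∀ i, 0 ≤ y i) ∨ ∀ i, y i ≤ 0 := by
    have hpos : ∀ i, (0 : ℤ) < a i := fun i => Nat.cast_pos.2 (Nat.pos_of_ne_zero (ha i))
    refine (le_total 0 s).imp (fun h i => ?_) fun h i => ?_
    · exact nonneg_of_mul_nonneg_right ((hy i).symm ▸ by positivity) (hpos i)
    · exact nonpos_of_mul_nonpos_right
        ((hy i).symm ▸ mul_nonpos_of_nonneg_of_nonpos (Nat.cast_nonneg _) h) (hpos i)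
  obtain ⟨p, q, hpq, hp, hq⟩ := exists_nat_sub_eq_and_sum_eq hsign hsum
  refine ⟨Finsupp.equivFunOnFinite.symm (Sum.elim (Sum.elim p fun j => E (Sum.inl (Sum.inr j)))
    (Sum.elim q fun j => E (Sum.inr (Sum.inr j)))), fun i => ?_, ?_⟩
  · simp [netDegree, hpq, ← hy, hs]
  · ext ((_ | j) | (_ | j))
    · simp [mapDomain_collapse_inl_inl, hp]
    · simp [mapDomain_collapse_inl_inr]
    · simp [mapDomain_collapse_inr_inl, hq]
    · simp [mapDomain_collapse_inr_inr]

end Collapse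

section PairExponent

variable {ι κ K : Type*}

/-- The exponent of `∏ i, (u_i v_i) ^ x i`. -/
noncomputable def pairExponent [Finite ι] (κ : Type*) [Finite κ] (x : ι → ℕ) :
    PhaseVar ι κ →₀ ℕ :=
  Finsupp.equivFunOnFinite.symm (Sum.elim (Sum.elim x 0) (Sum.elim x 0))

lemma IsWeightZero.of_add_pairExponent [Finite ι] [Fintype κ] {a n : ι → ℕ}
    {M : PhaseVar ι κ →₀ ℕ} {x : ι → ℕ} (h : IsWeightZero a n (M + pairExponent κ x)) :
    IsWeightZero a n M := fun i => by
  simpa [netDegree, pairExponent] using h i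

lemma prod_pairExponent [Fintype ι] [Finite κ] {G : Type*} [CommMonoid G] (g : PhaseVar ι κ → G)
    (x : ι → ℕ) : (pairExponent κ x).prod (fun y e => g y ^ e) =
      ∏ i, (g (Sum.inl (Sum.inl i)) * g (Sum.inr (Sum.inl i))) ^ x i := by
  have := Fintype.ofFinite κ
  rw [Finsupp.prod_fintype _ _ fun _ => pow_zero _]
  simp [pairExponent, mul_pow, Finset.prod_mul_distrib]

lemma prod_pairScale_add_pairExponent [Fintype ι] [Finite κ] [CommMonoid K] (c : ι → K)
    (M : PhaseVar ι κ →₀ ℕ) (x : ι → ℕ) :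
    (M + pairExponent κ x).prod (fun y e => pairScale κ c y ^ e) =
      M.prod (fun y e => pairScale κ c y ^ e) * ∏ i, (c i * c i) ^ x i := by
  rw [Finsupp.prod_add_index' (fun _ => pow_zero _) fun _ _ _ => pow_add _ _ _, prod_pairExponent]
  rfl

lemma monomial_add_pairExponent [Fintype ι] [Finite κ] [CommSemiring K] (M : PhaseVar ι κ →₀ ℕ)
    (x : ι → ℕ) : monomial (M + pairExponent κ x) (1 : K) =
      monomial M 1 * ∏ i, (X (Sum.inl (Sum.inl i)) * X (Sum.inr (Sum.inl i))) ^ x i := by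
  rw [← prod_pairExponent, ← one_mul (1 : K), ← monomial_mul, one_mul,
    monomial_eq (s := pairExponent κ x), C_1, one_mul]

lemma inf_add_pairExponent_tsub [Finite ι] [Finite κ] {D D' : PhaseVar ι κ →₀ ℕ}
    (hnet : ∀ i, netDegree D (Sum.inl i) = netDegree D' (Sum.inl i))
    (hu : ∀ j, D (Sum.inl (Sum.inr j)) = D' (Sum.inl (Sum.inr j)))
    (hv : ∀ j, D (Sum.inr (Sum.inr j)) = D' (Sum.inr (Sum.inr j))) :
    D ⊓ D' + pairExponent κ (fun i => D (Sum.inl (Sum.inl i)) - D' (Sum.inl (Sum.inl i))) = D := by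
  unfold netDegree at hnet
  ext ((i | j) | (i | j)) <;>
    simp only [pairExponent, Finsupp.add_apply, Finsupp.inf_apply,
      Finsupp.equivFunOnFinite_symm_apply_apply, Sum.elim_inl, Sum.elim_inr, Pi.zero_apply] <;>
    grind

lemma exists_eq_add_pairExponent [Fintype ι] [Fintype κ] {a n : ι → ℕ} (ha : ∀ i, a i ≠ 0)
    {D D' : PhaseVar ι κ →₀ ℕ} (hD : IsWeightZero a n D) (hD' : IsWeightZero a n D')
    (h : D.mapDomain (collapse ι κ) = D'.mapDomain (collapse ι κ)) :
    ∃ M x x', D = M + pairExponent κ x ∧ D' = M + pairExponent κ x' ∧ ∑ i, x i = ∑ i, x' i := by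
  have hu (j) : D (Sum.inl (Sum.inr j)) = D' (Sum.inl (Sum.inr j)) := by
    rw [← mapDomain_collapse_inl_inr, h, mapDomain_collapse_inl_inr]
  have hv (j) : D (Sum.inr (Sum.inr j)) = D' (Sum.inr (Sum.inr j)) := by
    rw [← mapDomain_collapse_inr_inr, h, mapDomain_collapse_inr_inr]
  have hnet (i) : netDegree D (Sum.inl i) = netDegree D' (Sum.inl i) :=
    mul_left_cancel₀ (Nat.cast_ne_zero.2 (ha i) : (a i : ℤ) ≠ 0) <| (hD i).trans <| by
      simpa only [netDegree, hu, hv] using (hD' i).symm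
  have hsum : ∑ i, D (Sum.inl (Sum.inl i)) = ∑ i, D' (Sum.inl (Sum.inl i)) := by
    rw [← mapDomain_collapse_inl_inl D (), h, mapDomain_collapse_inl_inl]
  refine ⟨D ⊓ D', _, fun i => D' (Sum.inl (Sum.inl i)) - D (Sum.inl (Sum.inl i)),
    (inf_add_pairExponent_tsub hnet hu hv).symm, ?_, ?_⟩
  · rw [inf_comm, inf_add_pairExponent_tsub (fun i => (hnet i).symm) (fun j => (hu j).symm)
      fun j => (hv j).symm]
  · refine Nat.add_right_cancel (m := ∑ i, D' (Sum.inl (Sum.inl i))) ?_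
    conv_rhs => rw [← hsum]
    simp only [← Finset.sum_add_distrib, tsub_add_eq_max, max_comm]

end PairExponent

section PhiZero

variable {ℓ k : ℕ} {a n m : Fin ℓ → ℕ} {α : ℕ}

/-- The factor `√(m_i/β)` by which `PhiZero` rescales `u_i` and `v_i`. -/
noncomputable def sqrtRatio (m : Fin ℓ → ℕ) (β : ℕ) (i : Fin ℓ) : ℂ :=
  (Real.sqrt ((m i : ℝ) / (β : ℝ)) : ℝ)

lemma sqrtRatio_mul_self (m : Fin ℓ → ℕ) (β : ℕ) (i : Fin ℓ) :
    sqrtRatio m β i * sqrtRatio m β i = (m i : ℂ) / β := by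
  rw [sqrtRatio, ← ofReal_mul, Real.mul_self_sqrt (by positivity), ofReal_div, ofReal_natCast,
    ofReal_natCast]

lemma sqrtRatio_ne_zero {β : ℕ} {i : Fin ℓ} (hm : m i ≠ 0) (hβ : β ≠ 0) :
    sqrtRatio m β i ≠ 0 := by
  rw [← mul_self_ne_zero, sqrtRatio_mul_self]
  exact div_ne_zero (Nat.cast_ne_zero.2 hm) (Nat.cast_ne_zero.2 hβ)

lemma prod_sqrtRatio_pow (m : Fin ℓ → ℕ) :
    ∏ i, sqrtRatio m (∑ i, m i) i ^ m i =
      (Real.sqrt (((∑ i, m i : ℕ) : ℝ) ^ (-((∑ i, m i : ℕ) : ℤ)) * ∏ j, (m j : ℝ) ^ m j) : ℝ) := by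
  simp only [sqrtRatio, ← ofReal_pow, ← ofReal_prod]
  rw [ofReal_inj, eq_comm, Real.sqrt_eq_iff_mul_self_eq (by positivity) (by positivity),
    ← Finset.prod_mul_distrib]
  have hsq (i) : √((m i : ℝ) / (∑ i, m i : ℕ)) * √((m i : ℝ) / (∑ i, m i : ℕ)) =
      (m i : ℝ) / (∑ i, m i : ℕ) := Real.mul_self_sqrt (by positivity)
  simp only [← mul_pow, hsq, div_pow, Finset.prod_div_distrib, Finset.prod_pow_eq_pow_sum,
    zpow_neg, zpow_natCast]
  rw [div_eq_inv_mul]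

lemma PhiZero_eq_scaledRename (k : ℕ) (m : Fin ℓ → ℕ) (β : ℕ) :
    PhiZero ℓ k m β = scaledRename (pairScale (Fin k) (sqrtRatio m β)) (collapse _ _) := by
  apply MvPolynomial.algHom_ext
  rintro ((i | j) | (i | j)) <;> simp [PhiZero, scaledRename, pairScale, collapse, sqrtRatio]

lemma PhiZero_X_mul_X (m : Fin ℓ → ℕ) (β : ℕ) (i : Fin ℓ) :
    PhiZero ℓ k m β (X (Sum.inl (Sum.inl i)) * X (Sum.inr (Sum.inl i))) =
      C ((m i : ℂ) / β) * (X (Sum.inl (Sum.inl ())) * X (Sum.inr (Sum.inl ()))) := by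
  rw [← sqrtRatio_mul_self]
  simp only [PhiZero, map_mul, aeval_X, sqrtRatio]
  ring

lemma PhiZero_prod_position_pow (m : Fin ℓ → ℕ) (s : Fin k → ℕ) :
    PhiZero ℓ k m (∑ i, m i)
        ((∏ i, X (Sum.inl (Sum.inl i)) ^ m i) * ∏ j, X (Sum.inl (Sum.inr j)) ^ s j) =
      C (∏ i, sqrtRatio m (∑ i, m i) i ^ m i) *
        (X (Sum.inl (Sum.inl ())) ^ (∑ i, m i) * ∏ j, X (Sum.inl (Sum.inr j)) ^ s j) := by
  simp only [PhiZero, sqrtRatio, map_mul, map_prod, map_pow, aeval_X, mul_pow,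
    Finset.prod_mul_distrib, Finset.prod_pow_eq_pow_sum, mul_assoc]

lemma PhiZero_prod_momentum_pow (m : Fin ℓ → ℕ) (s : Fin k → ℕ) :
    PhiZero ℓ k m (∑ i, m i)
        ((∏ i, X (Sum.inr (Sum.inl i)) ^ m i) * ∏ j, X (Sum.inr (Sum.inr j)) ^ s j) =
      C (∏ i, sqrtRatio m (∑ i, m i) i ^ m i) *
        (X (Sum.inr (Sum.inl ())) ^ (∑ i, m i) * ∏ j, X (Sum.inr (Sum.inr j)) ^ s j) := by
  simp only [PhiZero, sqrtRatio, map_mul, map_prod, map_pow, aeval_X, mul_pow,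
    Finset.prod_mul_distrib, Finset.prod_pow_eq_pow_sum, mul_assoc]

lemma PhiZero_JA {β : ℕ} (hβ : β ≠ 0) (ham : ∀ i, a i * m i = n i * α) (i : Fin ℓ) :
    PhiZero ℓ k m β (JA ℓ k a n i) = ((n i : ℂ) / β) • JB k α β := by
  have hβ' : (β : ℂ) ≠ 0 := Nat.cast_ne_zero.2 hβ
  have ham' : (a i : ℂ) * m i = n i * α := mod_cast ham i
  have hα : (a i : ℂ) * (m i / β) = n i / β * α := by
    rw [← mul_div_assoc, ham', div_mul_eq_mul_div]
  have hn : (n i : ℂ) = n i / β * β := (div_mul_cancel₀ _ hβ').symm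
  have hsum : PhiZero ℓ k m β (∑ j, X (Sum.inl (Sum.inr j)) * X (Sum.inr (Sum.inr j))) =
      ∑ j, X (Sum.inl (Sum.inr j)) * X (Sum.inr (Sum.inr j)) := by
    simp only [PhiZero, map_sum, map_mul, aeval_X]
  have hC (r : ℂ) : PhiZero ℓ k m β (C r) = C r := algHom_C _ r
  simp only [JA, JB, map_add, map_neg, mul_assoc, map_mul (PhiZero ℓ k m β) (C _) (_ : PA ℓ k),
    PhiZero_X_mul_X, hsum, hC, smul_eq_C_mul, mul_add, mul_neg]
  rw [← mul_assoc (C _), ← C_mul, hα, hn, C_mul, C_mul]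
  simp only [mul_assoc, div_mul_cancel₀ _ hβ']

lemma PhiZero_mem_invPB (ha : ∀ i, a i ≠ 0) (ham : ∀ i, a i * m i = n i * α) {f : PA ℓ k}
    (hf : f ∈ invPA ℓ k a n) : PhiZero ℓ k m (∑ i, m i) f ∈ invPB k α (∑ i, m i) := by
  rw [← Subalgebra.mem_toSubmodule, toSubmodule_invPA] at hf
  rw [← Subalgebra.mem_toSubmodule, toSubmodule_invPB, PhiZero_eq_scaledRename]
  exact scaledRename_mem_restrictSupport _ (fun D hD => hD.mapDomain_collapse ha ham) hf

end PhiZero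

section InvariantMap

variable {ℓ k : ℕ} {a n m : Fin ℓ → ℕ} {α : ℕ}

/-- The restriction `P_A^{inv} → P_B^{inv}` of `PhiZero`, with `β = ∑ i, m i`. -/
noncomputable def invariantMap (k : ℕ) (ha : ∀ i, a i ≠ 0) (ham : ∀ i, a i * m i = n i * α) :
    invPA ℓ k a n →ₐ[ℂ] invPB k α (∑ i, m i) :=
  ((PhiZero ℓ k m (∑ i, m i)).comp (invPA ℓ k a n).val).codRestrict _
    fun f => PhiZero_mem_invPB ha ham f.2

lemma coe_invariantMap (ha : ∀ i, a i ≠ 0) (ham : ∀ i, a i * m i = n i * α)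
    (f : invPA ℓ k a n) : (invariantMap k ha ham f : PB k) =
      scaledRename (pairScale (Fin k) (sqrtRatio m (∑ i, m i))) (collapse _ _) (f : PA ℓ k) := by
  rw [← PhiZero_eq_scaledRename]
  rfl

/-- The coefficient with which `PhiZero`, for `β = ∑ i, m i`, sends the monomial with exponent `D`
to a monomial. -/
noncomputable def imageCoeff (m : Fin ℓ → ℕ) (D : PhaseVar (Fin ℓ) (Fin k) →₀ ℕ) : ℂ :=
  D.prod fun x e => pairScale (Fin k) (sqrtRatio m (∑ i, m i)) x ^ e

lemma sum_ne_zero_of_apply_ne_zero {i : Fin ℓ} (hm : m i ≠ 0) : ∑ i, m i ≠ 0 := fun h =>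
  hm (Finset.sum_eq_zero_iff.1 h i (Finset.mem_univ i))

lemma imageCoeff_ne_zero (hm : ∀ i, m i ≠ 0) (D : PhaseVar (Fin ℓ) (Fin k) →₀ ℕ) :
    imageCoeff m D ≠ 0 := by
  have hsqrt (i) : sqrtRatio m (∑ i, m i) i ≠ 0 :=
    sqrtRatio_ne_zero (hm i) (sum_ne_zero_of_apply_ne_zero (hm i))
  refine Finset.prod_ne_zero_iff.2 fun x _ => pow_ne_zero _ ?_
  rcases x with (i | j) | (i | j)
  exacts [hsqrt i, one_ne_zero, hsqrt i, one_ne_zero]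

lemma imageCoeff_add_pairExponent (m : Fin ℓ → ℕ) (M : PhaseVar (Fin ℓ) (Fin k) →₀ ℕ)
    (x : Fin ℓ → ℕ) : imageCoeff m (M + pairExponent (Fin k) x) =
      imageCoeff m M * ∏ i, ((m i : ℂ) / (∑ i, m i : ℕ)) ^ x i := by
  simp only [imageCoeff, prod_pairScale_add_pairExponent, sqrtRatio_mul_self]

lemma invariantMap_monomialBasis (ha : ∀ i, a i ≠ 0) (ham : ∀ i, a i * m i = n i * α)
    (D : {D : PhaseVar (Fin ℓ) (Fin k) →₀ ℕ | IsWeightZero a n D}) :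
    invariantMap k ha ham (monomialBasis (toSubmodule_invPA a n) D) =
      imageCoeff m D.1 • monomialBasis (toSubmodule_invPB α (∑ i, m i))
        ⟨D.1.mapDomain (collapse _ _), D.2.mapDomain_collapse ha ham⟩ := by
  refine Subtype.ext ?_
  rw [coe_invariantMap, Subalgebra.coe_smul, coe_monomialBasis, coe_monomialBasis,
    scaledRename_monomial, smul_monomial, smul_eq_mul, imageCoeff]

lemma invariantMap_surjective (hℓ : 1 ≤ ℓ) (ha : ∀ i, a i ≠ 0) (hm : ∀ i, m i ≠ 0) (hα : α ≠ 0)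
    (ham : ∀ i, a i * m i = n i * α)
    (hdvd : ∀ s : ℕ, α ∣ (∑ i, m i) * s → ∀ i, a i ∣ n i * s) :
    Function.Surjective (invariantMap k ha ham) := by
  have : Nonempty (Fin ℓ) := ⟨⟨0, hℓ⟩⟩
  refine surjective_of_map_basis_eq_smul (φ := (invariantMap k ha ham).toLinearMap)
    (invariantMap_monomialBasis ha ham) (fun D => imageCoeff_ne_zero hm D.1) fun E => ?_
  obtain ⟨D, hD, hDE⟩ := exists_isWeightZero_mapDomain_collapse_eq ha hα ham hdvd E.2
  exact ⟨⟨D, hD⟩, Subtype.ext hDE⟩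

lemma X_mul_X_mem_invPA (a n : Fin ℓ → ℕ) (x : Fin ℓ ⊕ Fin k) :
    (X (Sum.inl x) * X (Sum.inr x) : PA ℓ k) ∈ invPA ℓ k a n := by
  classical
  rw [← Subalgebra.mem_toSubmodule, toSubmodule_invPA, X, X, monomial_mul,
    monomial_mem_restrictSupport]
  refine Or.inl fun i => ?_
  simp [netDegree, Finsupp.single_apply]

/-- The invariant `u_x v_x`. -/
noncomputable def pairInvariant (a n : Fin ℓ → ℕ) (x : Fin ℓ ⊕ Fin k) : invPA ℓ k a n :=
  ⟨X (Sum.inl x) * X (Sum.inr x), X_mul_X_mem_invPA a n x⟩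

/-- The moment polynomial `J_{A,i}` as an invariant. -/
noncomputable def momentInvariant (k : ℕ) (a n : Fin ℓ → ℕ) (i : Fin ℓ) : invPA ℓ k a n :=
  (n i : ℂ) • ∑ j, pairInvariant a n (Sum.inr j) - (a i : ℂ) • pairInvariant a n (Sum.inl i)

lemma coe_momentInvariant (a n : Fin ℓ → ℕ) (i : Fin ℓ) :
    (momentInvariant k a n i : PA ℓ k) = JA ℓ k a n i := by
  simp only [momentInvariant, pairInvariant, JA, Subalgebra.coe_sub, Subalgebra.coe_smul,
    AddSubmonoidClass.coe_finsetSum, smul_eq_C_mul, mul_assoc]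
  rw [sub_eq_neg_add]

lemma idealA_eq_span_range (k : ℕ) (a n : Fin ℓ → ℕ) :
    idealA ℓ k a n = Ideal.span (Set.range (momentInvariant k a n)) := by
  refine congrArg Ideal.span (Set.ext fun f => exists_congr fun i => ?_)
  rw [← coe_momentInvariant, Subtype.coe_inj, eq_comm]

lemma invariantMap_momentInvariant (ha : ∀ i, a i ≠ 0) (ham : ∀ i, a i * m i = n i * α)
    (hβ : ∑ i, m i ≠ 0) (i : Fin ℓ) :
    (invariantMap k ha ham (momentInvariant k a n i) : PB k) =
      ((n i : ℂ) / (∑ i, m i : ℕ)) • JB k α (∑ i, m i) := by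
  rw [← PhiZero_JA hβ ham, ← coe_momentInvariant]
  rfl

lemma map_invariantMap_idealA (hℓ : 1 ≤ ℓ) (ha : ∀ i, a i ≠ 0) (hm : ∀ i, m i ≠ 0)
    (ham : ∀ i, a i * m i = n i * α) :
    (idealA ℓ k a n).map (invariantMap k ha ham) = idealB k α (∑ i, m i) := by
  have hβ : ∑ i, m i ≠ 0 := sum_ne_zero_of_apply_ne_zero (hm ⟨0, hℓ⟩)
  have hn (i) : n i ≠ 0 := left_ne_zero_of_mul (ham i ▸ mul_ne_zero (ha i) (hm i))
  have hc (i) : (n i : ℂ) / (∑ i, m i : ℕ) ≠ 0 :=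
    div_ne_zero (Nat.cast_ne_zero.2 (hn i)) (Nat.cast_ne_zero.2 hβ)
  rw [idealA_eq_span_range, Ideal.map_span]
  refine le_antisymm (Ideal.span_le.2 ?_) (Ideal.span_le.2 fun g hg => ?_)
  · rintro _ ⟨_, ⟨i, rfl⟩, rfl⟩
    rw [← smul_inv_smul₀ (hc i) (invariantMap k ha ham (momentInvariant k a n i))]
    refine Submodule.smul_of_tower_mem _ _ (Ideal.subset_span ?_)
    change _ • (invariantMap k ha ham (momentInvariant k a n i) : PB k) = _
    rw [invariantMap_momentInvariant ha ham hβ, inv_smul_smul₀ (hc i)]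
  · have hg' : g = ((n ⟨0, hℓ⟩ : ℂ) / (∑ i, m i : ℕ))⁻¹ •
        invariantMap k ha ham (momentInvariant k a n ⟨0, hℓ⟩) := Subtype.ext <| by
      rw [Subalgebra.coe_smul, invariantMap_momentInvariant ha ham hβ, inv_smul_smul₀ (hc _)]
      exact hg
    rw [hg']
    exact Submodule.smul_of_tower_mem _ _ (Ideal.subset_span ⟨_, ⟨_, rfl⟩, rfl⟩)

/-- The class modulo `J_A` to which every `u_i v_i` is proportional, with the factor `m_i/β` by
which `PhiZero` sends `u_i v_i` to a multiple of `z_1 w_1`. -/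
noncomputable def commonPairClass (k : ℕ) (a n : Fin ℓ → ℕ) (α β : ℕ) :
    invPA ℓ k a n ⧸ idealA ℓ k a n :=
  ((β : ℂ) / α) • Ideal.Quotient.mk _ (∑ j, pairInvariant a n (Sum.inr j))

lemma mk_pairInvariant_inl (ha : ∀ i, a i ≠ 0) (hα : α ≠ 0) (ham : ∀ i, a i * m i = n i * α)
    {β : ℕ} (hβ : β ≠ 0) (i : Fin ℓ) :
    Ideal.Quotient.mk (idealA ℓ k a n) (pairInvariant a n (Sum.inl i)) =
      ((m i : ℂ) / β) • commonPairClass k a n α β := by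
  have hmoment : (a i : ℂ) • Ideal.Quotient.mk (idealA ℓ k a n) (pairInvariant a n (Sum.inl i)) =
      (n i : ℂ) • Ideal.Quotient.mk (idealA ℓ k a n) (∑ j, pairInvariant a n (Sum.inr j)) := by
    refine (Ideal.Quotient.eq.2 ?_).symm
    rw [idealA_eq_span_range]
    exact Ideal.subset_span ⟨i, rfl⟩
  have ha' : (a i : ℂ) ≠ 0 := Nat.cast_ne_zero.2 (ha i)
  have hα' : (α : ℂ) ≠ 0 := Nat.cast_ne_zero.2 hα
  have hβ' : (β : ℂ) ≠ 0 := Nat.cast_ne_zero.2 hβ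
  have ham' : (a i : ℂ) * m i = n i * α := mod_cast ham i
  have hratio : (m i : ℂ) / β * (β / α) = (a i : ℂ)⁻¹ * n i := by
    field_simp
    linear_combination ham'
  rw [commonPairClass, smul_smul, hratio, mul_smul, ← hmoment, inv_smul_smul₀ ha']

lemma imageCoeff_smul_mk_monomialBasis (ha : ∀ i, a i ≠ 0) (hm : ∀ i, m i ≠ 0) (hα : α ≠ 0)
    (ham : ∀ i, a i * m i = n i * α) {M : PhaseVar (Fin ℓ) (Fin k) →₀ ℕ}
    {x : Fin ℓ → ℕ} (h : IsWeightZero a n (M + pairExponent (Fin k) x)) :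
    imageCoeff m M • Ideal.Quotient.mk (idealA ℓ k a n)
        (monomialBasis (toSubmodule_invPA a n) ⟨_, h⟩) =
      imageCoeff m (M + pairExponent (Fin k) x) • (Ideal.Quotient.mk (idealA ℓ k a n)
        (monomialBasis (toSubmodule_invPA a n) ⟨M, h.of_add_pairExponent⟩) *
          commonPairClass k a n α (∑ i, m i) ^ ∑ i, x i) := by
  have hfactor : monomialBasis (toSubmodule_invPA a n) ⟨_, h⟩ =
      monomialBasis (toSubmodule_invPA a n) ⟨M, h.of_add_pairExponent⟩ *
        ∏ i, pairInvariant a n (Sum.inl i) ^ x i := Subtype.ext <| by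
    simp only [Subalgebra.coe_mul, SubmonoidClass.coe_finsetProd, Subalgebra.coe_pow,
      coe_monomialBasis, monomial_add_pairExponent, pairInvariant]
  have hmk (i) := mk_pairInvariant_inl (k := k) ha hα ham
    (sum_ne_zero_of_apply_ne_zero (hm i)) i
  simp only [hfactor, map_mul, map_prod, map_pow, hmk, smul_pow ((_ : ℂ) / _), Finset.prod_smul,
    Finset.prod_pow_eq_pow_sum, mul_smul_comm, imageCoeff_add_pairExponent, mul_smul]

lemma imageCoeff_smul_mk_monomialBasis_comm (ha : ∀ i, a i ≠ 0) (hm : ∀ i, m i ≠ 0) (hα : α ≠ 0)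
    (ham : ∀ i, a i * m i = n i * α)
    (D D' : {D : PhaseVar (Fin ℓ) (Fin k) →₀ ℕ | IsWeightZero a n D})
    (h : D.1.mapDomain (collapse _ _) = D'.1.mapDomain (collapse _ _)) :
    imageCoeff m D'.1 • Ideal.Quotient.mk (idealA ℓ k a n)
        (monomialBasis (toSubmodule_invPA a n) D) =
      imageCoeff m D.1 • Ideal.Quotient.mk (idealA ℓ k a n)
        (monomialBasis (toSubmodule_invPA a n) D') := by
  obtain ⟨D, hD⟩ := D
  obtain ⟨D', hD'⟩ := D'
  obtain ⟨M, x, x', rfl, rfl, hx⟩ := exists_eq_add_pairExponent ha hD hD' h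
  rw [← (imageCoeff_ne_zero hm M).isUnit.smul_left_cancel, smul_comm,
    imageCoeff_smul_mk_monomialBasis ha hm hα ham, smul_comm (imageCoeff m M),
    imageCoeff_smul_mk_monomialBasis ha hm hα ham, hx, smul_comm]

lemma ker_invariantMap_le_idealA (ha : ∀ i, a i ≠ 0) (hm : ∀ i, m i ≠ 0) (hα : α ≠ 0)
    (ham : ∀ i, a i * m i = n i * α) :
    RingHom.ker (invariantMap k ha ham) ≤ idealA ℓ k a n := fun f hf => by
  have hker := ker_le_ker_of_map_basis_eq_smul (φ := (invariantMap k ha ham).toLinearMap)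
    (q := (Ideal.Quotient.mkₐ ℂ (idealA ℓ k a n)).toLinearMap)
    (invariantMap_monomialBasis ha ham) (fun D => imageCoeff_ne_zero hm D.1)
    fun D D' h => imageCoeff_smul_mk_monomialBasis_comm ha hm hα ham D D' (Subtype.ext_iff.1 h)
  exact Ideal.Quotient.eq_zero_iff_mem.1 (hker hf)

lemma invariantMap_image_isHomogeneous (ha : ∀ i, a i ≠ 0) (ham : ∀ i, a i * m i = n i * α)
    (hsurj : Function.Surjective (invariantMap k ha ham)) (d : ℕ) :
    invariantMap k ha ham '' {f | (f : PA ℓ k).IsHomogeneous d} =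
      {g : invPB k α (∑ i, m i) | (g : PB k).IsHomogeneous d} := by
  refine Set.Subset.antisymm (Set.image_subset_iff.2 fun f hf => ?_) fun g hg => ?_
  · rw [Set.mem_preimage, Set.mem_ofPred_eq, coe_invariantMap]
    exact isHomogeneous_scaledRename _ _ hf
  · obtain ⟨f, rfl⟩ := hsurj g
    refine ⟨⟨_, homogeneousComponent_mem (toSubmodule_invPA a n) f.2 d⟩,
      homogeneousComponent_isHomogeneous d _, Subtype.ext ?_⟩
    rw [coe_invariantMap, ← homogeneousComponent_scaledRename, ← coe_invariantMap ha ham,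
      homogeneousComponent_of_mem hg, if_pos rfl]

end InvariantMap

section Faithfulness

variable {ι : Type*} [Fintype ι] {a n : ι → ℕ}

lemma mul_mul_lcm_div (a n : ι → ℕ) (i : ι) :
    a i * (n i * Finset.univ.lcm a / a i) = n i * Finset.univ.lcm a :=
  Nat.mul_div_cancel' ((Finset.dvd_lcm (Finset.mem_univ i)).mul_left _)

lemma coprime_sum_mul_prod_erase [DecidableEq ι] (h : ∀ i j, i ≠ j → (a i).Coprime (a j)) {i : ι}
    (hi : (a i).Coprime (n i)) :
    (a i).Coprime (∑ j, n j * ∏ l ∈ Finset.univ.erase j, a l) := by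
  have hdvd : a i ∣ ∑ j ∈ Finset.univ.erase i, n j * ∏ l ∈ Finset.univ.erase j, a l :=
    Finset.dvd_sum fun j hj => (Finset.dvd_prod_of_mem a (Finset.mem_erase.2
      ⟨(Finset.ne_of_mem_erase hj).symm, Finset.mem_univ i⟩)).mul_left _
  obtain ⟨c, hc⟩ := hdvd
  rw [← Finset.add_sum_erase _ _ (Finset.mem_univ i), hc, Nat.coprime_add_mul_left_right]
  exact hi.mul_right (Nat.Coprime.prod_right fun j hj => h i j (Finset.ne_of_mem_erase hj).symm)

lemma dvd_of_lcm_dvd_sum_mul (ha : ∀ i, a i ≠ 0) (h : ∀ i j, i ≠ j → (a i).Coprime (a j)) {s : ℕ}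
    (hs : Finset.univ.lcm a ∣ (∑ i, n i * Finset.univ.lcm a / a i) * s) {i : ι}
    (hi : (a i).Coprime (n i)) : a i ∣ s := by
  classical
  have hlcm (j) : n j * Finset.univ.lcm a / a j = n j * ∏ l ∈ Finset.univ.erase j, a l := by
    rw [Finset.lcm_eq_prod fun i _ j _ hij => h i j hij,
      ← Finset.mul_prod_erase _ a (Finset.mem_univ j), Nat.mul_left_comm,
      Nat.mul_div_cancel_left _ (Nat.pos_of_ne_zero (ha j))]
  simp only [hlcm] at hs
  exact (coprime_sum_mul_prod_erase h hi).dvd_of_dvd_mul_left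
    ((Finset.dvd_lcm (Finset.mem_univ i)).trans hs)

end Faithfulness

theorem stmt13_general (ℓ k : ℕ) (hℓ : 1 ≤ ℓ) (a n m : Fin ℓ → ℕ) (α : ℕ)
    (ha : ∀ i, 0 < a i) (hn : ∀ i, 0 < n i) (hα : 0 < α) (ham : ∀ i, a i * m i = n i * α)
    (hdvd : ∀ s : ℕ, α ∣ (∑ i, m i) * s → ∀ i, a i ∣ n i * s) :
    let β : ℕ := ∑ i, m i
    let Cconst : ℂ := ((Real.sqrt ((β : ℝ) ^ (-(β : ℤ)) * ∏ j, (m j : ℝ) ^ m j) : ℝ) : ℂ)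
    (∀ i, PhiZero ℓ k m β (X (Sum.inl (Sum.inl i)) * X (Sum.inr (Sum.inl i)))
        = C ((m i : ℂ) / (β : ℂ)) * (X (Sum.inl (Sum.inl ())) * X (Sum.inr (Sum.inl ()))))
    ∧
    (∀ i j : Fin k, PhiZero ℓ k m β (X (Sum.inl (Sum.inr i)) * X (Sum.inr (Sum.inr j)))
        = X (Sum.inl (Sum.inr i)) * X (Sum.inr (Sum.inr j)))
    ∧
    (∀ s : Fin k → ℕ, (∑ j, s j) = α →
      PhiZero ℓ k m β ((∏ i, X (Sum.inl (Sum.inl i)) ^ m i) * ∏ j, X (Sum.inl (Sum.inr j)) ^ s j)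
        = C Cconst * (X (Sum.inl (Sum.inl ())) ^ β * ∏ j, X (Sum.inl (Sum.inr j)) ^ s j))
    ∧
    (∀ s : Fin k → ℕ, (∑ j, s j) = α →
      PhiZero ℓ k m β ((∏ i, X (Sum.inr (Sum.inl i)) ^ m i) * ∏ j, X (Sum.inr (Sum.inr j)) ^ s j)
        = C Cconst * (X (Sum.inr (Sum.inl ())) ^ β * ∏ j, X (Sum.inr (Sum.inr j)) ^ s j))
    ∧
    (∀ f : PA ℓ k, f ∈ invPA ℓ k a n → PhiZero ℓ k m β f ∈ invPB k α β)
    ∧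
    (∃ Φ : (invPA ℓ k a n ⧸ idealA ℓ k a n) ≃ₐ[ℂ] (invPB k α β ⧸ idealB k α β),
      (∀ (f : invPA ℓ k a n) (g : invPB k α β),
          PhiZero ℓ k m β (f : PA ℓ k) = (g : PB k) →
          Φ (Ideal.Quotient.mk (idealA ℓ k a n) f) = Ideal.Quotient.mk (idealB k α β) g)
      ∧
      (∀ d : ℕ,
        Φ '' (Ideal.Quotient.mk (idealA ℓ k a n) ''
            {f : invPA ℓ k a n | ((f : PA ℓ k)).IsHomogeneous d})
          = Ideal.Quotient.mk (idealB k α β) ''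
            {g : invPB k α β | ((g : PB k)).IsHomogeneous d})) := by
  dsimp only
  rw [← prod_sqrtRatio_pow]
  have ha' (i) : a i ≠ 0 := (ha i).ne'
  have hm (i) : m i ≠ 0 :=
    right_ne_zero_of_mul ((ham i).symm ▸ (Nat.mul_pos (hn i) hα).ne' : a i * m i ≠ 0)
  have hsurj := invariantMap_surjective (k := k) hℓ ha' hm hα.ne' ham hdvd
  obtain ⟨Φ, hΦ⟩ := exists_quotientAlgEquiv_of_surjective hsurj
    (map_invariantMap_idealA hℓ ha' hm ham) (ker_invariantMap_le_idealA ha' hm hα.ne' ham)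
  refine ⟨PhiZero_X_mul_X m _, fun i j => ?_, fun s _ => PhiZero_prod_position_pow m s,
    fun s _ => PhiZero_prod_momentum_pow m s, fun f hf => PhiZero_mem_invPB ha' ham hf,
    Φ, fun f g hfg => ?_, fun d => ?_⟩
  · simp only [PhiZero, map_mul, aeval_X]
  · exact (hΦ f).trans (congrArg _ (Subtype.ext hfg))
  · simp only [← invariantMap_image_isHomogeneous ha' ham hsurj d, Set.image_image, hΦ]

/-- the map `Φ` is well defined on the generating invariants as stated,
maps invariants to invariants, and descends to a degree-preserving isomorphism of graded
ℂ-algebras `P_A^{inv}/(J_{A,1},…,J_{A,ℓ}) → P_B^{inv}/(J_B)`. -/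
theorem stmt13 (ℓ k : ℕ) (hℓ : 1 ≤ ℓ) (hk : 1 ≤ k)
    (a n : Fin ℓ → ℕ)
    (ha : ∀ i, 0 < a i) (hn : ∀ i, 0 < n i)
    (hF1 : ∀ i j, i ≠ j → Nat.gcd (a i) (a j) = 1)
    (hF2 : ∀ i, Nat.gcd (a i) (n i) = 1) :
    let α : ℕ := Finset.univ.lcm a
    let m : Fin ℓ → ℕ := fun i => n i * α / a i
    let β : ℕ := ∑ i, m i
    let Cconst : ℂ := ((Real.sqrt ((β : ℝ) ^ (-(β : ℤ)) * ∏ j, (m j : ℝ) ^ m j) : ℝ) : ℂ)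
    -- Φ is given on the generators as stated:
    (∀ i, PhiZero ℓ k m β (X (Sum.inl (Sum.inl i)) * X (Sum.inr (Sum.inl i)))
        = C ((m i : ℂ) / (β : ℂ)) * (X (Sum.inl (Sum.inl ())) * X (Sum.inr (Sum.inl ()))))
    ∧
    (∀ i j : Fin k, PhiZero ℓ k m β (X (Sum.inl (Sum.inr i)) * X (Sum.inr (Sum.inr j)))
        = X (Sum.inl (Sum.inr i)) * X (Sum.inr (Sum.inr j)))
    ∧
    (∀ s : Fin k → ℕ, (∑ j, s j) = α →
      PhiZero ℓ k m β ((∏ i, X (Sum.inl (Sum.inl i)) ^ m i) * ∏ j, X (Sum.inl (Sum.inr j)) ^ s j)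
        = C Cconst * (X (Sum.inl (Sum.inl ())) ^ β * ∏ j, X (Sum.inl (Sum.inr j)) ^ s j))
    ∧
    (∀ s : Fin k → ℕ, (∑ j, s j) = α →
      PhiZero ℓ k m β ((∏ i, X (Sum.inr (Sum.inl i)) ^ m i) * ∏ j, X (Sum.inr (Sum.inr j)) ^ s j)
        = C Cconst * (X (Sum.inr (Sum.inl ())) ^ β * ∏ j, X (Sum.inr (Sum.inr j)) ^ s j))
    ∧
    -- Φ maps invariants to invariants:
    (∀ f : PA ℓ k, f ∈ invPA ℓ k a n → PhiZero ℓ k m β f ∈ invPB k α β)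
    ∧
    -- Φ descends to a degree-preserving isomorphism of graded ℂ-algebras:
    (∃ Φ : (invPA ℓ k a n ⧸ idealA ℓ k a n) ≃ₐ[ℂ] (invPB k α β ⧸ idealB k α β),
      (∀ (f : invPA ℓ k a n) (g : invPB k α β),
          PhiZero ℓ k m β (f : PA ℓ k) = (g : PB k) →
          Φ (Ideal.Quotient.mk (idealA ℓ k a n) f) = Ideal.Quotient.mk (idealB k α β) g)
      ∧
      (∀ d : ℕ,
        Φ '' (Ideal.Quotient.mk (idealA ℓ k a n) ''
            {f : invPA ℓ k a n | ((f : PA ℓ k)).IsHomogeneous d})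
          = Ideal.Quotient.mk (idealB k α β) ''
            {g : invPB k α β | ((g : PB k)).IsHomogeneous d})) :=
  stmt13_general ℓ k hℓ a n _ _ ha hn
    (Nat.pos_of_ne_zero (Finset.lcm_ne_zero_iff.2 fun i _ => (ha i).ne')) (mul_mul_lcm_div a n)
    fun _ hs i => (dvd_of_lcm_dvd_sum_mul (fun j => (ha j).ne') hF1 hs (hF2 i)).mul_left _
end
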